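/- arXiv:math/9912221 — 4 statements merged into one kernel-verified Lean document; each statement's English description precedes it below -/
import Mathlib

section
/- Let R be a regular commutative coherent ring. Then the map f, sending a wide subcategory C of finitely presented R-modules to the thick subcategory f(C) = {small X ∈ D(R) : H_n X ∈ C for all n}, is a lattice isomorphism from the lattice of wide subcategories of finitely presented R-modules onto the lattice of thick subcategories of small objects of D(R). Consequently, the map sending S ∈ J̃(Spec R) to the wide subcategory {finitely presented M : M_{(p)} = 0 for all p ∈ S} is an isomorphism from J̃(Spec R) (with order reversed) onto the lattice of wide subcategories of finitely presented R-modules. -/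
open CategoryTheory CategoryTheory.Limits CategoryTheory.Pretriangulated ZeroObject

universe w u

/-- A full subcategory (given as a set of objects) of an abelian category is *wide*
if it is closed under isomorphisms, kernels, cokernels and extensions. -/
structure IsWideSubcategory {A : Type*} [Category A] [Abelian A] (C : Set A) : Prop where
  mem_of_iso : ∀ {X Y : A}, (X ≅ Y) → X ∈ C → Y ∈ C
  kernel_mem : ∀ {X Y : A} (f : X ⟶ Y), X ∈ C → Y ∈ C → kernel f ∈ C
  cokernel_mem : ∀ {X Y : A} (f : X ⟶ Y), X ∈ C → Y ∈ C → cokernel f ∈ C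
  extension_mem : ∀ (S : CategoryTheory.ShortComplex A), S.ShortExact →
    S.X₁ ∈ C → S.X₃ ∈ C → S.X₂ ∈ C

/-- The wide subcategory generated by a set of objects: the intersection of all
wide subcategories containing it. -/
def wideClosure {A : Type*} [Category A] [Abelian A] (S : Set A) : Set A :=
  ⋂₀ {C : Set A | IsWideSubcategory C ∧ S ⊆ C}

/-- `C₀`, the wide subcategory of `R`-modules generated by the module `R`. -/
def wideSubcatGenByRing (R : Type u) [Ring R] : Set (ModuleCat.{u} R) :=
  wideClosure {ModuleCat.of R R}

/-- A thick subcategory of a (pre)triangulated category: a full triangulated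
subcategory closed under retracts (direct summands). -/
structure IsThickSubcategory {T : Type*} [Category T] [HasZeroObject T] [Preadditive T]
    [HasShift T ℤ] [∀ n : ℤ, (shiftFunctor T n).Additive] [Pretriangulated T]
    (D : Set T) : Prop where
  mem_of_iso : ∀ {X Y : T}, (X ≅ Y) → X ∈ D → Y ∈ D
  zero_mem : (0 : T) ∈ D
  shift_mem : ∀ (X : T) (n : ℤ), X ∈ D → X⟦n⟧ ∈ D
  ext₂ : ∀ (T' : Triangle T), T' ∈ (distTriang T) → T'.obj₁ ∈ D → T'.obj₃ ∈ D → T'.obj₂ ∈ D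
  retract_mem : ∀ (X Y : T) (i : X ⟶ Y) (r : Y ⟶ X), i ≫ r = 𝟙 X → Y ∈ D → X ∈ D

/-- An object of the derived category of `R`-modules is *small* if it belongs to every
thick subcategory containing the complex `S⁰R` (`R` concentrated in degree `0`), i.e. to
the thick subcategory generated by `S⁰R`; equivalently, `Hom(X,-)` commutes with
arbitrary direct sums. -/
def IsSmallObject {R : Type u} [Ring R] [HasDerivedCategory.{w} (ModuleCat.{u} R)]
    (X : DerivedCategory (ModuleCat.{u} R)) : Prop :=
  ∀ D : Set (DerivedCategory (ModuleCat.{u} R)), IsThickSubcategory D →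
    (DerivedCategory.singleFunctor (ModuleCat.{u} R) 0).obj (ModuleCat.of R R) ∈ D → X ∈ D

/-- The map `f` : it sends a wide subcategory `C` to the collection of small objects `X`
of the derived category such that `Hₙ X ∈ C` for all `n`. -/
def fSet {R : Type u} [Ring R] [HasDerivedCategory.{w} (ModuleCat.{u} R)]
    (C : Set (ModuleCat.{u} R)) : Set (DerivedCategory (ModuleCat.{u} R)) :=
  {X | IsSmallObject X ∧
    ∀ n : ℤ, (DerivedCategory.homologyFunctor (ModuleCat.{u} R) n).obj X ∈ C}

/-- The map `g` : it sends a thick subcategory `D` to the wide subcategory generated by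
the homology modules `Hₙ X` for `X ∈ D` and `n : ℤ`. -/
def gSet {R : Type u} [Ring R] [HasDerivedCategory.{w} (ModuleCat.{u} R)]
    (D : Set (DerivedCategory (ModuleCat.{u} R))) : Set (ModuleCat.{u} R) :=
  wideClosure {M | ∃ X ∈ D, ∃ n : ℤ,
    Nonempty ((DerivedCategory.homologyFunctor (ModuleCat.{u} R) n).obj X ≅ M)}

/-- A ring is left coherent if every finitely generated left ideal is finitely
presented as a module. -/
def IsLeftCoherentRing (R : Type u) [Ring R] : Prop :=
  ∀ I : Ideal R, I.FG → Module.FinitePresentation R I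

/-- The collection of finitely presented `R`-modules. -/
def finPresModules (R : Type u) [Ring R] : Set (ModuleCat.{u} R) :=
  {M : ModuleCat.{u} R | Module.FinitePresentation R M}

/-- An `R`-module `M` has finite projective dimension if there is an `i` such that
`Ext^j(M, N) = 0` for all modules `N` and all `j > i`. -/
def HasFiniteProjectiveDimension (R : Type u) [Ring R] (M : ModuleCat.{u} R) : Prop :=
  ∃ i : ℕ, ∀ (N : ModuleCat.{u} R) (j : ℕ), i < j →
    Subsingleton (((_root_.Ext ℤ (ModuleCat.{u} R) j).obj (Opposite.op M)).obj N)

/-- The lattice of (nonempty) wide subcategories of finitely presented `R`-modules. -/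
def wideLatticeFP (R : Type u) [Ring R] : Set (Set (ModuleCat.{u} R)) :=
  {C | IsWideSubcategory C ∧ C.Nonempty ∧ C ⊆ finPresModules R}

/-- The lattice of thick subcategories of small objects of the derived category. -/
def thickLatticeSmall (R : Type u) [Ring R] [HasDerivedCategory.{w} (ModuleCat.{u} R)] :
    Set (Set (DerivedCategory (ModuleCat.{u} R))) :=
  {D | IsThickSubcategory D ∧ ∀ X ∈ D, IsSmallObject X}

/-- `f` is a lattice isomorphism from the lattice of wide subcategories of finitely
presented `R`-modules onto the lattice of thick subcategories of small objects of
`D(R)`: it maps the first lattice into the second, preserves and reflects inclusions,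
and is surjective. -/
def fIsLatticeIso (R : Type u) [Ring R] [HasDerivedCategory.{w} (ModuleCat.{u} R)] : Prop :=
  (∀ C ∈ wideLatticeFP R, fSet C ∈ thickLatticeSmall R) ∧
  (∀ C₁ ∈ wideLatticeFP R, ∀ C₂ ∈ wideLatticeFP R, (fSet C₁ ⊆ fSet C₂ ↔ C₁ ⊆ C₂)) ∧
  (∀ D ∈ thickLatticeSmall R, ∃ C ∈ wideLatticeFP R, fSet C = D)

/-- `J̃(Spec R)`: the collection of subsets of `Spec R` that are arbitrary intersections
of quasi-compact Zariski-open subsets. -/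
def tildeJ (R : Type u) [CommRing R] : Set (Set (PrimeSpectrum R)) :=
  {S | ∃ 𝒰 : Set (Set (PrimeSpectrum R)),
    (∀ U ∈ 𝒰, IsOpen U ∧ IsCompact U) ∧ S = ⋂₀ 𝒰}

/-- The wide subcategory of finitely presented modules vanishing upon localization at
every prime of `S`. -/
def supportVanishing (R : Type u) [CommRing R] (S : Set (PrimeSpectrum R)) :
    Set (ModuleCat.{u} R) :=
  {M | Module.FinitePresentation R M ∧
    ∀ p ∈ S, Subsingleton (LocalizedModule p.asIdeal.primeCompl M)}

section Coherent
variable {R : Type u} [CommRing R]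

lemma fp_ker_of_inj {M P L : Type*} [AddCommGroup M] [Module R M] [AddCommGroup P] [Module R P]
    [AddCommGroup L] [Module R L] (f : M →ₗ[R] P) (t : LinearMap.ker f →ₗ[R] L)
    (ht : Function.Injective t) (h : Module.FinitePresentation R (LinearMap.range t)) :
    Module.FinitePresentation R (LinearMap.ker f) :=
  (LinearEquiv.ofInjective t ht).finitePresentation_iff.mpr h

lemma coh_fp_sub_pi (hcoh : IsLeftCoherentRing R) (n : ℕ) :
    ∀ N : Submodule R (Fin n → R), N.FG → Module.FinitePresentation R N := by
  induction n with
  | zero => intro N _; infer_instance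
  | succ n ih =>
    intro N hN
    have : Module.Finite R N := Module.Finite.iff_fg.mpr hN
    let f : N →ₗ[R] R := (LinearMap.proj 0).comp N.subtype
    have hI : (LinearMap.range f).FG := Module.Finite.fg_top.map f |> fun h => by
      rwa [LinearMap.range_eq_map]
    have hIfp : Module.FinitePresentation R (LinearMap.range f) := hcoh _ hI
    have hker : (LinearMap.ker f.rangeRestrict).FG :=
      Module.FinitePresentation.fg_ker f.rangeRestrict f.surjective_rangeRestrict
    let t : LinearMap.ker f.rangeRestrict →ₗ[R] (Fin n → R) :=
      ((LinearMap.funLeft R R Fin.succ).comp N.subtype).comp (Submodule.subtype _)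
    have ht : Function.Injective t := by
      rw [injective_iff_map_eq_zero]
      rintro ⟨⟨x, hx⟩, hk⟩ h
      have h0 : x 0 = 0 := by
        have := congrArg Subtype.val (LinearMap.mem_ker.mp hk)
        simpa [f] using this
      have h1 : ∀ i, x (Fin.succ i) = 0 := fun i => congrFun h i
      ext i
      exact Fin.cases h0 h1 i
    have : Module.Finite R (LinearMap.ker f.rangeRestrict) := Module.Finite.iff_fg.mpr hker
    have h1 := ih (LinearMap.range t) (by
      rw [LinearMap.range_eq_map]; exact Module.Finite.fg_top.map t)
    have h2 : Module.FinitePresentation R (LinearMap.ker f.rangeRestrict) :=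
      fp_ker_of_inj f.rangeRestrict t ht h1
    exact Module.finitePresentation_of_ker f.rangeRestrict f.surjective_rangeRestrict

lemma coh_fp_sub (hcoh : IsLeftCoherentRing R) {M : Type*} [AddCommGroup M] [Module R M]
    [Module.FinitePresentation R M] (N : Submodule R M) (hN : N.FG) :
    Module.FinitePresentation R N := by
  obtain ⟨n, f, hf⟩ := Module.Finite.exists_fin' R M
  have hk := Module.FinitePresentation.fg_ker f hf
  have hN' : (N.comap f).FG := by
    apply Submodule.fg_of_fg_map_of_fg_inf_ker f
    · rwa [Submodule.map_comap_eq_of_surjective hf]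
    · rwa [inf_eq_right.mpr]
      intro x hx
      simp only [LinearMap.mem_ker] at hx
      simp [hx]
  have := coh_fp_sub_pi hcoh n _ hN'
  let g : N.comap f →ₗ[R] N := f.restrict (fun x hx => hx)
  refine Module.finitePresentation_of_surjective g ?_ ?_
  · rintro ⟨y, hy⟩
    obtain ⟨x, rfl⟩ := hf y
    exact ⟨⟨x, hy⟩, rfl⟩
  · have : (LinearMap.ker f).comap (N.comap f).subtype = LinearMap.ker g := by
      ext x
      simp [g, Subtype.ext_iff]
    rw [← this]
    have h2 : ((LinearMap.ker f).comap (N.comap f).subtype).map (N.comap f).subtype =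
        LinearMap.ker f := by
      rw [Submodule.map_comap_subtype, inf_eq_right]
      intro x hx
      simp only [LinearMap.mem_ker] at hx
      simp [hx]
    refine Submodule.fg_of_fg_map_injective (N.comap f).subtype (Subtype.val_injective) ?_
    rwa [h2]

lemma coh_fp_range (hcoh : IsLeftCoherentRing R) {M N : Type*} [AddCommGroup M] [Module R M]
    [AddCommGroup N] [Module R N] [Module.Finite R M]
    [Module.FinitePresentation R N] (f : M →ₗ[R] N) :
    Module.FinitePresentation R (LinearMap.range f) :=
  coh_fp_sub hcoh _ (by rw [LinearMap.range_eq_map]; exact Module.Finite.fg_top.map f)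

lemma coh_fp_ker (hcoh : IsLeftCoherentRing R) {M N : Type*} [AddCommGroup M] [Module R M]
    [AddCommGroup N] [Module R N] [Module.FinitePresentation R M]
    [Module.FinitePresentation R N] (f : M →ₗ[R] N) :
    Module.FinitePresentation R (LinearMap.ker f) := by
  have := coh_fp_range hcoh f
  have h := Module.FinitePresentation.fg_ker f.rangeRestrict f.surjective_rangeRestrict
  rw [LinearMap.ker_rangeRestrict] at h
  exact coh_fp_sub hcoh _ h

lemma coh_fp_quot {M : Type*} [AddCommGroup M] [Module R M]
    [Module.FinitePresentation R M] (N : Submodule R M) (hN : N.FG) :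
    Module.FinitePresentation R (M ⧸ N) :=
  Module.finitePresentation_of_surjective N.mkQ N.mkQ_surjective (by rwa [Submodule.ker_mkQ])

lemma fp_of_iso {X Y : ModuleCat.{u} R} (e : X ≅ Y) (h : Module.FinitePresentation R X) :
    Module.FinitePresentation R Y :=
  Module.FinitePresentation.of_equiv e.toLinearEquiv

lemma fp_kernel (hcoh : IsLeftCoherentRing R) {X Y : ModuleCat.{u} R} (f : X ⟶ Y)
    (hX : Module.FinitePresentation R X) (hY : Module.FinitePresentation R Y) :
    Module.FinitePresentation R (kernel f : ModuleCat.{u} R) := by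
  have := coh_fp_ker hcoh f.hom
  exact fp_of_iso (X := ModuleCat.of R (LinearMap.ker f.hom)) (ModuleCat.kernelIsoKer f).symm this

lemma fp_cokernel {X Y : ModuleCat.{u} R} (f : X ⟶ Y)
    (hX : Module.FinitePresentation R X) (hY : Module.FinitePresentation R Y) :
    Module.FinitePresentation R (cokernel f : ModuleCat.{u} R) := by
  have := coh_fp_quot (LinearMap.range f.hom)
    (by rw [LinearMap.range_eq_map]; exact Module.Finite.fg_top.map f.hom)
  exact fp_of_iso (X := ModuleCat.of R (Y ⧸ LinearMap.range f.hom))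
    (ModuleCat.cokernelIsoRangeQuotient f).symm this

lemma fp_ext (S : CategoryTheory.ShortComplex (ModuleCat.{u} R)) (hS : S.ShortExact)
    (h1 : Module.FinitePresentation R S.X₁) (h3 : Module.FinitePresentation R S.X₃) :
    Module.FinitePresentation R S.X₂ := by
  have hsurj : Function.Surjective S.g.hom := hS.moduleCat_surjective_g
  have hinj : Function.Injective S.f.hom := hS.moduleCat_injective_f
  have hex : Function.Exact S.f.hom S.g.hom := (ShortComplex.ShortExact.moduleCat_exact_iff_function_exact S).mp hS.exact
  have : Module.FinitePresentation R (LinearMap.ker S.g.hom) := by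
    rw [LinearMap.exact_iff.mp hex]
    exact Module.FinitePresentation.of_equiv (LinearEquiv.ofInjective S.f.hom hinj)
  exact Module.finitePresentation_of_ker S.g.hom hsurj

/-- The finitely presented modules form a wide subcategory over a coherent ring. -/
lemma fp_isWide (hcoh : IsLeftCoherentRing R) : IsWideSubcategory (finPresModules R) where
  mem_of_iso e h := fp_of_iso e h
  kernel_mem f hX hY := fp_kernel hcoh f hX hY
  cokernel_mem f hX hY := fp_cokernel f hX hY
  extension_mem S hS h1 h3 := fp_ext S hS h1 h3

end Coherent

section Reg
variable {R : Type u} [CommRing R]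

lemma hasProjDimLT_of_finite (M : ModuleCat.{u} R) (h : HasFiniteProjectiveDimension R M) :
    ∃ n : ℕ, HasProjectiveDimensionLT M n := by
  obtain ⟨i, hi⟩ := h
  refine ⟨i + 1, ?_⟩
  let P : ProjectiveResolution M := ProjectiveResolution.of M
  apply HasProjectiveDimensionLT.mk
  intro j hj Y e
  obtain ⟨k, rfl⟩ : ∃ k, j = k + 1 := ⟨j - 1, by omega⟩
  obtain ⟨f, hf, rfl⟩ := P.extMk_surjective e (k + 2) rfl
  rw [P.extMk_eq_zero_iff f (k+2) rfl hf k rfl]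
  have hs := hi Y (k + 1) (by omega)
  have hz : IsZero ((P.complex.linearYonedaObj ℤ Y).homology (k + 1)) := by
    refine IsZero.of_iso ?_ (P.isoExt (R := ℤ) (k + 1) Y).symm
    exact ModuleCat.isZero_of_subsingleton _
  rw [← HomologicalComplex.exactAt_iff_isZero_homology,
    HomologicalComplex.exactAt_iff' _ k (k+1) (k+2) (by simp) (by simp),
    ShortComplex.moduleCat_exact_iff] at hz
  obtain ⟨g, hg⟩ := hz (show P.complex.X (k+1) ⟶ Y from f) hf
  exact ⟨g, hg⟩

lemma fp_induction (hcoh : IsLeftCoherentRing R)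
    (hreg : ∀ M : ModuleCat.{u} R, Module.FinitePresentation R M →
      HasFiniteProjectiveDimension R M) (Q : ModuleCat.{u} R → Prop)
    (hproj : ∀ P : ModuleCat.{u} R, Module.Projective R P → Module.Finite R P → Q P)
    (hses : ∀ S : ShortComplex (ModuleCat.{u} R), S.ShortExact → Module.Projective R S.X₂ →
      Module.Finite R S.X₂ → Q S.X₁ → Q S.X₃)
    (M : ModuleCat.{u} R) (hM : Module.FinitePresentation R M) : Q M := by
  suffices ∀ n : ℕ, ∀ M : ModuleCat.{u} R, Module.FinitePresentation R M →
      HasProjectiveDimensionLT M (n + 1) → Q M by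
    obtain ⟨n, hn⟩ := hasProjDimLT_of_finite M (hreg M hM)
    exact this n M hM (hasProjectiveDimensionLT_of_ge M n (n + 1) (by omega))
  intro n
  induction n with
  | zero =>
    intro M hM h
    have : Projective M := projective_iff_hasProjectiveDimensionLT_one.mpr h
    exact hproj M ((IsProjective.iff_projective M).mpr this) inferInstance
  | succ n ih =>
    intro M hM h
    obtain ⟨m, f, hf⟩ := Module.Finite.exists_fin' R M
    have hS := LinearMap.shortExact_shortComplexKer hf
    have hP : Module.Projective R (Fin m → R) := inferInstance
    have hP' : Projective (ModuleCat.of R (Fin m → R)) := 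
      (IsProjective.iff_projective (ModuleCat.of R (Fin m → R))).mp hP
    refine hses _ hS hP (inferInstanceAs (Module.Finite R (Fin m → R))) ?_
    refine ih _ (coh_fp_ker hcoh f) ?_
    exact (hS.hasProjectiveDimensionLT_X₃_iff n hP').mp h
end Reg

section ThickGeneric

variable {T : Type*} [Category T] [HasZeroObject T] [Preadditive T]
    [HasShift T ℤ] [∀ n : ℤ, (shiftFunctor T n).Additive] [Pretriangulated T]
    {D : Set T}

theorem thick_ext₃ (hD : IsThickSubcategory D) (T' : Triangle T) (hT : T' ∈ distTriang T)
    (h1 : T'.obj₁ ∈ D) (h2 : T'.obj₂ ∈ D) : T'.obj₃ ∈ D :=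
  hD.ext₂ _ (rot_of_distTriang _ hT) h2 (hD.shift_mem _ 1 h1)

theorem thick_ext₁ (hD : IsThickSubcategory D) (T' : Triangle T) (hT : T' ∈ distTriang T)
    (h2 : T'.obj₂ ∈ D) (h3 : T'.obj₃ ∈ D) : T'.obj₁ ∈ D :=
  hD.ext₂ _ (inv_rot_of_distTriang _ hT) (hD.shift_mem _ (-1) h3) h2

theorem thick_of_shift (hD : IsThickSubcategory D) (X : T) (n : ℤ) (h : X⟦n⟧ ∈ D) : X ∈ D :=
  hD.mem_of_iso ((shiftShiftNeg X n)) (hD.shift_mem _ (-n) h)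

theorem thick_of_isZero (hD : IsThickSubcategory D) (X : T) (h : IsZero X) : X ∈ D :=
  hD.mem_of_iso h.isoZero.symm hD.zero_mem

/-- morphisms whose cone lies in `D`. -/
def ConeIn (D : Set T) {X Y : T} (f : X ⟶ Y) : Prop :=
  ∃ (Z : T) (g : Y ⟶ Z) (h : Z ⟶ X⟦(1 : ℤ)⟧), Triangle.mk f g h ∈ distTriang T ∧ Z ∈ D

theorem ConeIn.comp [IsTriangulated T] (hD : IsThickSubcategory D) {X Y Z : T}
    {f : X ⟶ Y} {g : Y ⟶ Z} (hf : ConeIn D f) (hg : ConeIn D g) : ConeIn D (f ≫ g) := by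
  obtain ⟨A, a, a', hA, hAD⟩ := hf
  obtain ⟨B, b, b', hB, hBD⟩ := hg
  obtain ⟨V, v, v', hV⟩ := distinguished_cocone_triangle (f ≫ g)
  exact ⟨V, v, v', hV, hD.ext₂ _ (Triangulated.someOctahedron rfl hA hB hV).mem hAD hBD⟩

theorem ConeIn.factor [IsTriangulated T] (hD : IsThickSubcategory D) {N Z : T}
    (i : N ⟶ Z) (r : Z ⟶ N) (hZ : Z ∈ D) (h : ConeIn D (i ≫ r)) : N ∈ D := by
  obtain ⟨N', t, t', ht⟩ := distinguished_cocone_triangle r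
  have hW : ConeIn D t := ⟨_, _, _, rot_of_distTriang _ ht, hD.shift_mem _ 1 hZ⟩
  obtain ⟨V, v, v', hV, hVD⟩ := h.comp hD hW
  have h0 : (i ≫ r) ≫ t = 0 := by
    have this : r ≫ t = 0 := comp_distTriang_mor_zero₁₂ _ ht
    rw [Category.assoc, this, comp_zero]
  obtain ⟨s, hs⟩ := Triangle.coyoneda_exact₁ _ hV (𝟙 (N⟦(1:ℤ)⟧)) (by
    change 𝟙 (N⟦(1:ℤ)⟧) ≫ (shiftFunctor T (1:ℤ)).map ((i ≫ r) ≫ t) = 0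
    rw [h0, Category.id_comp, Functor.map_zero])
  exact thick_of_shift hD N 1 (hD.retract_mem _ V s v' hs.symm hVD)

end ThickGeneric

section ThickDer

variable {R : Type u} [CommRing R] [HasDerivedCategory.{w} (ModuleCat.{u} R)]
  {D : Set (DerivedCategory (ModuleCat.{u} R))}

/-- `S⁰ M`. -/
noncomputable abbrev sg (M : ModuleCat.{u} R) : DerivedCategory (ModuleCat.{u} R) :=
  (DerivedCategory.singleFunctor (ModuleCat.{u} R) 0).obj M

theorem sg_ses_coneIn_f (S : ShortComplex (ModuleCat.{u} R)) (hS : S.ShortExact)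
    (h : sg S.X₃ ∈ D) :
    ConeIn D ((DerivedCategory.singleFunctor (ModuleCat.{u} R) 0).map S.f) :=
  ⟨_, _, _, hS.singleTriangle_distinguished, h⟩

theorem sg_ses_coneIn_g (hD : IsThickSubcategory D) (S : ShortComplex (ModuleCat.{u} R))
    (hS : S.ShortExact) (h : sg S.X₁ ∈ D) :
    ConeIn D ((DerivedCategory.singleFunctor (ModuleCat.{u} R) 0).map S.g) :=
  ⟨_, _, _, rot_of_distTriang _ hS.singleTriangle_distinguished, hD.shift_mem _ 1 h⟩

theorem sg_ses₁ (hD : IsThickSubcategory D) (S : ShortComplex (ModuleCat.{u} R))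
    (hS : S.ShortExact) (h2 : sg S.X₂ ∈ D) (h3 : sg S.X₃ ∈ D) : sg S.X₁ ∈ D :=
  thick_ext₁ hD _ hS.singleTriangle_distinguished h2 h3

theorem sg_ses₂ (hD : IsThickSubcategory D) (S : ShortComplex (ModuleCat.{u} R))
    (hS : S.ShortExact) (h1 : sg S.X₁ ∈ D) (h3 : sg S.X₃ ∈ D) : sg S.X₂ ∈ D :=
  hD.ext₂ _ hS.singleTriangle_distinguished h1 h3

theorem sg_ses₃ (hD : IsThickSubcategory D) (S : ShortComplex (ModuleCat.{u} R))
    (hS : S.ShortExact) (h1 : sg S.X₁ ∈ D) (h2 : sg S.X₂ ∈ D) : sg S.X₃ ∈ D :=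
  thick_ext₃ hD _ hS.singleTriangle_distinguished h1 h2

theorem single_mem_iff (hD : IsThickSubcategory D) (M : ModuleCat.{u} R) (n : ℤ) :
    (DerivedCategory.singleFunctor (ModuleCat.{u} R) n).obj M ∈ D ↔ sg M ∈ D := by
  have e := ((DerivedCategory.singleFunctors (ModuleCat.{u} R)).shiftIso n 0 n (by simp)).app M
  constructor
  · intro h
    exact hD.mem_of_iso e (hD.shift_mem _ n h)
  · intro h
    exact thick_of_shift hD _ n (hD.mem_of_iso e.symm h)

/-- small objects form a thick subcategory -/
theorem small_isThick : IsThickSubcategory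
    {X : DerivedCategory (ModuleCat.{u} R) | IsSmallObject X} where
  mem_of_iso e h D hD hR := hD.mem_of_iso e (h D hD hR)
  zero_mem D hD hR := hD.zero_mem
  shift_mem X n h D hD hR := hD.shift_mem X n (h D hD hR)
  ext₂ T' hT h1 h3 D hD hR := hD.ext₂ T' hT (h1 D hD hR) (h3 D hD hR)
  retract_mem X Y i r hi h D hD hR := hD.retract_mem X Y i r hi (h D hD hR)

theorem small_ring : IsSmallObject (sg (ModuleCat.of R R)) := fun _ _ h => h

/-- free f.g. modules -/
theorem sg_pi_mem (hD : IsThickSubcategory D) (M : Type u) [AddCommGroup M] [Module R M]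
    (h : sg (ModuleCat.of R M) ∈ D) (n : ℕ) :
    sg (ModuleCat.of R (Fin n → M)) ∈ D := by
  induction n with
  | zero =>
    apply thick_of_isZero hD
    refine Functor.map_isZero _ ?_
    exact ModuleCat.isZero_of_subsingleton _
  | succ n ih =>
    let S : ShortComplex (ModuleCat.{u} R) := ShortComplex.mk
      (ModuleCat.ofHom (LinearMap.inl R M (Fin n → M)))
      (ModuleCat.ofHom (LinearMap.snd R M (Fin n → M))) (by ext; rfl)
    have hS : S.ShortExact := by
      apply ModuleCat.shortComplex_shortExact
      · exact Function.Exact.inl_snd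
      · exact LinearMap.inl_injective
      · exact LinearMap.snd_surjective
    have := sg_ses₂ hD S hS h ih
    refine hD.mem_of_iso ((DerivedCategory.singleFunctor (ModuleCat.{u} R) 0).mapIso ?_) this
    exact (LinearEquiv.toModuleIso (Fin.consLinearEquiv R (fun _ : Fin (n+1) => M)))

theorem sg_proj_mem (hD : IsThickSubcategory D) (hR : sg (ModuleCat.of R R) ∈ D)
    (P : ModuleCat.{u} R) (h1 : Module.Projective R P) (h2 : Module.Finite R P) : sg P ∈ D := by
  obtain ⟨n, f, g, -, -, hfg⟩ := Module.Finite.exists_comp_eq_id_of_projective R P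
  refine hD.retract_mem _ _
    ((DerivedCategory.singleFunctor (ModuleCat.{u} R) 0).map (ModuleCat.ofHom g))
    ((DerivedCategory.singleFunctor (ModuleCat.{u} R) 0).map (ModuleCat.ofHom f)) ?_
    (sg_pi_mem hD R hR n)
  rw [← Functor.map_comp, ← ModuleCat.ofHom_comp, hfg]
  exact CategoryTheory.Functor.map_id _ _

theorem sg_fp_mem (hcoh : IsLeftCoherentRing R)
    (hreg : ∀ M : ModuleCat.{u} R, Module.FinitePresentation R M →
      HasFiniteProjectiveDimension R M)
    (hD : IsThickSubcategory D) (hR : sg (ModuleCat.of R R) ∈ D)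
    (M : ModuleCat.{u} R) (hM : Module.FinitePresentation R M) : sg M ∈ D := by
  refine fp_induction hcoh hreg (fun M => sg M ∈ D) ?_ ?_ M hM
  · exact fun P h1 h2 => sg_proj_mem hD hR P h1 h2
  · exact fun S hS h1 h2 h => sg_ses₃ hD S hS h (sg_proj_mem hD hR _ h1 h2)

theorem sg_fp_small (hcoh : IsLeftCoherentRing R)
    (hreg : ∀ M : ModuleCat.{u} R, Module.FinitePresentation R M →
      HasFiniteProjectiveDimension R M)
    (M : ModuleCat.{u} R) (hM : Module.FinitePresentation R M) : IsSmallObject (sg M) :=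
  fun _ hD hR => sg_fp_mem hcoh hreg hD hR M hM

end ThickDer

theorem wide_five {A : Type*} [Category A] [Abelian A] {C : Set A} (hC : IsWideSubcategory C)
    {X₁ X₂ X₃ X₄ X₅ : A} (f : X₁ ⟶ X₂) (g : X₂ ⟶ X₃) (h : X₃ ⟶ X₄) (k : X₄ ⟶ X₅)
    (w₁ : f ≫ g = 0) (w₂ : g ≫ h = 0) (w₃ : h ≫ k = 0)
    (e₁ : (ShortComplex.mk f g w₁).Exact) (e₂ : (ShortComplex.mk g h w₂).Exact)
    (e₃ : (ShortComplex.mk h k w₃).Exact)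
    (h₁ : X₁ ∈ C) (h₂ : X₂ ∈ C) (h₄ : X₄ ∈ C) (h₅ : X₅ ∈ C) : X₃ ∈ C := by
  let S : ShortComplex A := ShortComplex.mk (cokernel.desc f g w₁) (kernel.lift k h w₃)
    (by
      rw [← cancel_epi (cokernel.π f), ← cancel_mono (kernel.ι k)]
      simp [w₂])
  have hmono : Mono S.f := e₁.mono_cokernelDesc
  have hepi : Epi S.g := e₃.epi_kernelLift
  have hex : S.Exact := by
    let S' : ShortComplex A := ShortComplex.mk g (kernel.lift k h w₃)
      (by rw [← cancel_mono (kernel.ι k)]; simp [w₂])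
    let φ : S' ⟶ S := { τ₁ := cokernel.π f, τ₂ := 𝟙 _, τ₃ := 𝟙 _ }
    let ψ : S' ⟶ ShortComplex.mk g h w₂ := { τ₁ := 𝟙 _, τ₂ := 𝟙 _, τ₃ := kernel.ι k }
    have : Epi φ.τ₁ := inferInstanceAs (Epi (cokernel.π f))
    have : IsIso φ.τ₂ := inferInstanceAs (IsIso (𝟙 _))
    have : Mono φ.τ₃ := inferInstanceAs (Mono (𝟙 _))
    have : Epi ψ.τ₁ := inferInstanceAs (Epi (𝟙 _))
    have : IsIso ψ.τ₂ := inferInstanceAs (IsIso (𝟙 _))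
    have : Mono ψ.τ₃ := inferInstanceAs (Mono (kernel.ι k))
    rw [← ShortComplex.exact_iff_of_epi_of_isIso_of_mono φ,
      ShortComplex.exact_iff_of_epi_of_isIso_of_mono ψ]
    exact e₂
  exact hC.extension_mem S { exact := hex, mono_f := hmono, epi_g := hepi }
    (hC.cokernel_mem f h₁ h₂) (hC.kernel_mem k h₄ h₅)

theorem wide_zero {A : Type*} [Category A] [Abelian A] {C : Set A} (hC : IsWideSubcategory C)
    (hne : C.Nonempty) (X : A) (hX : IsZero X) : X ∈ C := by
  obtain ⟨Y, hY⟩ := hne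
  exact hC.mem_of_iso ((isZero_kernel_of_mono (𝟙 Y)).iso hX) (hC.kernel_mem (𝟙 Y) hY hY)

theorem wide_retract {A : Type*} [Category A] [Abelian A] {C : Set A} (hC : IsWideSubcategory C)
    (X Y : A) (i : X ⟶ Y) (r : Y ⟶ X) (h : i ≫ r = 𝟙 X) (hY : Y ∈ C) : X ∈ C := by
  have hm : Mono i := by
    have : Mono (i ≫ r) := by rw [h]; infer_instance
    exact mono_of_mono i r
  refine hC.mem_of_iso ?_ (hC.kernel_mem (𝟙 Y - r ≫ i) hY hY)
  refine { hom := kernel.ι _ ≫ r, inv := kernel.lift _ i ?_, hom_inv_id := ?_, inv_hom_id := ?_ }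
  · rw [Preadditive.comp_sub, ← Category.assoc, h]; simp
  · rw [← cancel_mono (kernel.ι _)]
    have := kernel.condition (𝟙 Y - r ≫ i)
    rw [Preadditive.comp_sub, Category.comp_id, sub_eq_zero] at this
    simp only [Category.assoc, kernel.lift_ι, Category.id_comp]
    exact this.symm
  · simp [h]

section
variable {R : Type u} [CommRing R] [HasDerivedCategory.{w} (ModuleCat.{u} R)]


theorem hom_shift_iso (X : DerivedCategory (ModuleCat.{u} R)) (n k : ℤ) :
    Nonempty ((DerivedCategory.homologyFunctor (ModuleCat.{u} R) k).obj (X⟦n⟧) ≅ (DerivedCategory.homologyFunctor (ModuleCat.{u} R) (n + k)).obj X) :=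
  ⟨(((DerivedCategory.homologyFunctor (ModuleCat.{u} R) 0).shiftIso n k (n+k) rfl).app X)⟩

theorem hom_wide_thick {C : Set (ModuleCat.{u} R)} (hC : IsWideSubcategory C)
    (hne : C.Nonempty) : IsThickSubcategory
      {X : DerivedCategory (ModuleCat.{u} R) | ∀ n : ℤ, (DerivedCategory.homologyFunctor (ModuleCat.{u} R) n).obj X ∈ C} where
  mem_of_iso e h n := hC.mem_of_iso ((DerivedCategory.homologyFunctor (ModuleCat.{u} R) n).mapIso e) (h n)
  zero_mem n := wide_zero hC hne _ (Functor.map_isZero _ (isZero_zero _))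
  shift_mem X n h k := hC.mem_of_iso (hom_shift_iso X n k).some.symm (h (n + k))
  ext₂ T' hT h1 h3 n :=
    wide_five hC _ _ _ _ _ _ _
      (DerivedCategory.HomologySequence.exact₁ T' hT (n-1) n (by simp))
      (DerivedCategory.HomologySequence.exact₂ T' hT n)
      (DerivedCategory.HomologySequence.exact₃ T' hT n (n+1) rfl) (h3 _) (h1 _) (h3 _) (h1 _)
  retract_mem X Y i r hi h n := wide_retract hC _ _ ((DerivedCategory.homologyFunctor (ModuleCat.{u} R) n).map i) ((DerivedCategory.homologyFunctor (ModuleCat.{u} R) n).map r)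
    (by rw [← Functor.map_comp, hi]; exact CategoryTheory.Functor.map_id _ _) (h n)

theorem hom_iso₁₂ (T' : Triangle (DerivedCategory (ModuleCat.{u} R))) (hT : T' ∈ distTriang _)
    (n : ℤ) (h : IsZero ((DerivedCategory.homologyFunctor (ModuleCat.{u} R) (n-1)).obj T'.obj₃)) (h' : IsZero ((DerivedCategory.homologyFunctor (ModuleCat.{u} R) n).obj T'.obj₃)) :
    Nonempty ((DerivedCategory.homologyFunctor (ModuleCat.{u} R) n).obj T'.obj₁ ≅ (DerivedCategory.homologyFunctor (ModuleCat.{u} R) n).obj T'.obj₂) := by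
  have : Mono ((DerivedCategory.homologyFunctor (ModuleCat.{u} R) n).map T'.mor₁) := by
    rw [DerivedCategory.HomologySequence.mono_homologyMap_mor₁_iff T' hT (n-1) n (by simp)]
    exact h.eq_of_src _ _
  have : Epi ((DerivedCategory.homologyFunctor (ModuleCat.{u} R) n).map T'.mor₁) := by
    rw [DerivedCategory.HomologySequence.epi_homologyMap_mor₁_iff T' hT n]
    exact h'.eq_of_tgt _ _
  have := isIso_of_mono_of_epi ((DerivedCategory.homologyFunctor (ModuleCat.{u} R) n).map T'.mor₁)
  exact ⟨asIso ((DerivedCategory.homologyFunctor (ModuleCat.{u} R) n).map T'.mor₁)⟩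

theorem hom_iso₂₃ (T' : Triangle (DerivedCategory (ModuleCat.{u} R))) (hT : T' ∈ distTriang _)
    (n : ℤ) (h : IsZero ((DerivedCategory.homologyFunctor (ModuleCat.{u} R) (n+1)).obj T'.obj₁)) (h' : IsZero ((DerivedCategory.homologyFunctor (ModuleCat.{u} R) n).obj T'.obj₁)) :
    Nonempty ((DerivedCategory.homologyFunctor (ModuleCat.{u} R) n).obj T'.obj₂ ≅ (DerivedCategory.homologyFunctor (ModuleCat.{u} R) n).obj T'.obj₃) := by
  have : Mono ((DerivedCategory.homologyFunctor (ModuleCat.{u} R) n).map T'.mor₂) := by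
    rw [DerivedCategory.HomologySequence.mono_homologyMap_mor₂_iff T' hT n]
    exact h'.eq_of_src _ _
  have : Epi ((DerivedCategory.homologyFunctor (ModuleCat.{u} R) n).map T'.mor₂) := by
    rw [DerivedCategory.HomologySequence.epi_homologyMap_mor₂_iff T' hT n (n+1) rfl]
    exact h.eq_of_tgt _ _
  have := isIso_of_mono_of_epi ((DerivedCategory.homologyFunctor (ModuleCat.{u} R) n).map T'.mor₂)
  exact ⟨asIso ((DerivedCategory.homologyFunctor (ModuleCat.{u} R) n).map T'.mor₂)⟩

theorem hom_single (M : ModuleCat.{u} R) (n : ℤ) :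
    Nonempty ((DerivedCategory.homologyFunctor (ModuleCat.{u} R) n).obj ((DerivedCategory.singleFunctor (ModuleCat.{u} R) n).obj M) ≅ M) :=
  ⟨(DerivedCategory.homologyFunctorFactors (ModuleCat.{u} R) n).app _ ≪≫
    (HomologicalComplex.homologyFunctorSingleIso (ModuleCat.{u} R) (ComplexShape.up ℤ) n).app M⟩

theorem hom_single_zero (M : ModuleCat.{u} R) (n k : ℤ) (h : k ≠ n) :
    IsZero ((DerivedCategory.homologyFunctor (ModuleCat.{u} R) k).obj ((DerivedCategory.singleFunctor (ModuleCat.{u} R) n).obj M)) := by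
  rcases lt_or_gt_of_ne h with h | h
  · exact DerivedCategory.isZero_of_isGE _ n k h
  · exact DerivedCategory.isZero_of_isLE _ n k h

theorem trunc_lemma (E : Set (DerivedCategory (ModuleCat.{u} R)))
    (hiso : ∀ {X Y : DerivedCategory (ModuleCat.{u} R)}, (X ≅ Y) → X ∈ E → Y ∈ E)
    (hext : ∀ T' ∈ distTriang (DerivedCategory (ModuleCat.{u} R)),
      T'.obj₁ ∈ E → T'.obj₃ ∈ E → T'.obj₂ ∈ E) (k : ℕ) :
    ∀ (a : ℤ) (X : DerivedCategory (ModuleCat.{u} R)),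
      (∀ n, (n < a ∨ a + k < n) → IsZero ((DerivedCategory.homologyFunctor (ModuleCat.{u} R) n).obj X)) →
      (∀ n, (DerivedCategory.singleFunctor (ModuleCat.{u} R) n).obj ((DerivedCategory.homologyFunctor (ModuleCat.{u} R) n).obj X) ∈ E) →
      X ∈ E := by
  have base : ∀ (a : ℤ) (X : DerivedCategory (ModuleCat.{u} R)),
      (∀ n, n ≠ a → IsZero ((DerivedCategory.homologyFunctor (ModuleCat.{u} R) n).obj X)) →
      (DerivedCategory.singleFunctor (ModuleCat.{u} R) a).obj ((DerivedCategory.homologyFunctor (ModuleCat.{u} R) a).obj X) ∈ E → X ∈ E := by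
    intro a X h0 h
    have h1 : X.IsGE a := (DerivedCategory.isGE_iff X a).2 fun i hi => h0 i hi.ne
    have h2 : X.IsLE a := (DerivedCategory.isLE_iff X a).2 fun i hi => h0 i hi.ne'
    obtain ⟨Y, ⟨e⟩⟩ := DerivedCategory.exists_iso_singleFunctor_obj_of_isGE_of_isLE X a
    have e' : (DerivedCategory.homologyFunctor (ModuleCat.{u} R) a).obj X ≅ Y := (DerivedCategory.homologyFunctor (ModuleCat.{u} R) a).mapIso e ≪≫ (hom_single Y a).some
    exact hiso ((DerivedCategory.singleFunctor _ a).mapIso e' ≪≫ e.symm) h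
  induction k with
  | zero =>
    intro a X h0 h
    refine base a X (fun n hn => h0 n ?_) (h a)
    simp; omega
  | succ k ih =>
    intro a X h0 h
    obtain ⟨X', Y, hX', hY, f, g, d, hT⟩ :=
      DerivedCategory.TStructure.t.exists_triangle X a (a+1) rfl
    have hX'0 : ∀ n, a < n → IsZero ((DerivedCategory.homologyFunctor (ModuleCat.{u} R) n).obj X') := fun n hn =>
      (DerivedCategory.isLE_iff X' a).1 ⟨hX'⟩ n hn
    have hY0 : ∀ n, n < a + 1 → IsZero ((DerivedCategory.homologyFunctor (ModuleCat.{u} R) n).obj Y) := fun n hn =>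
      (DerivedCategory.isGE_iff Y (a+1)).1 ⟨hY⟩ n hn
    have i1 : ∀ n, n ≤ a → Nonempty ((DerivedCategory.homologyFunctor (ModuleCat.{u} R) n).obj X' ≅ (DerivedCategory.homologyFunctor (ModuleCat.{u} R) n).obj X) := fun n hn =>
      hom_iso₁₂ _ hT n (hY0 _ (by omega)) (hY0 _ (by omega))
    have i2 : ∀ n, a < n → Nonempty ((DerivedCategory.homologyFunctor (ModuleCat.{u} R) n).obj X ≅ (DerivedCategory.homologyFunctor (ModuleCat.{u} R) n).obj Y) := fun n hn =>
      hom_iso₂₃ _ hT n (hX'0 _ (by omega)) (hX'0 _ (by omega))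
    refine hext _ hT ?_ ?_
    · refine base a X' (fun n hn => ?_) ?_
      · rcases lt_or_gt_of_ne hn with hn | hn
        · exact (h0 n (Or.inl hn)).of_iso (i1 n hn.le).some
        · exact hX'0 n hn
      · exact hiso ((DerivedCategory.singleFunctor _ a).mapIso (i1 a le_rfl).some.symm) (h a)
    · refine ih (a+1) Y (fun n hn => ?_) (fun n => ?_)
      · rcases hn with hn | hn
        · exact hY0 n hn
        · exact (h0 n (Or.inr (by push_cast; omega))).of_iso (i2 n (by omega)).some.symm
      · by_cases hn : a < n
        · exact hiso ((DerivedCategory.singleFunctor _ n).mapIso (i2 n hn).some) (h n)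
        · -- zero object
          have hz : IsZero ((DerivedCategory.homologyFunctor (ModuleCat.{u} R) n).obj Y) := hY0 n (by omega)
          have hz' : IsZero ((DerivedCategory.homologyFunctor (ModuleCat.{u} R) (a - 1)).obj X) := h0 _ (Or.inl (by omega))
          refine hiso ?_ (h (a-1))
          exact (Functor.map_isZero _ hz').iso (Functor.map_isZero _ hz)

/-- bounded homology -/
def HBounded (X : DerivedCategory (ModuleCat.{u} R)) : Prop :=
  ∃ b : ℕ, ∀ n : ℤ, b < n.natAbs → IsZero ((DerivedCategory.homologyFunctor (ModuleCat.{u} R) n).obj X)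

theorem hbounded_thick : IsThickSubcategory
    {X : DerivedCategory (ModuleCat.{u} R) | HBounded X} where
  mem_of_iso e := fun ⟨b, h⟩ => ⟨b, fun n hn => (h n hn).of_iso ((DerivedCategory.homologyFunctor (ModuleCat.{u} R) n).mapIso e.symm)⟩
  zero_mem := ⟨0, fun n hn => Functor.map_isZero _ (isZero_zero _)⟩
  shift_mem X n := fun ⟨b, h⟩ => ⟨b + n.natAbs, fun k hk =>
    (h (n+k) (by omega)).of_iso (hom_shift_iso X n k).some⟩
  ext₂ T' hT := fun ⟨b1, h1⟩ ⟨b3, h3⟩ => ⟨max b1 b3, fun n hn =>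
    (DerivedCategory.HomologySequence.exact₂ T' hT n).isZero_X₂
      ((h1 n (by omega)).eq_of_src _ _) ((h3 n (by omega)).eq_of_tgt _ _)⟩
  retract_mem X Y i r hi := fun ⟨b, h⟩ => ⟨b, fun n hn => by
    rw [IsZero.iff_id_eq_zero]
    have : (DerivedCategory.homologyFunctor (ModuleCat.{u} R) n).map i ≫ (DerivedCategory.homologyFunctor (ModuleCat.{u} R) n).map r = 𝟙 _ := by
      rw [← Functor.map_comp, hi]; exact CategoryTheory.Functor.map_id _ _
    rw [← this, (h n hn).eq_of_tgt ((DerivedCategory.homologyFunctor (ModuleCat.{u} R) n).map i) 0, zero_comp]⟩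

theorem small_hbounded (X : DerivedCategory (ModuleCat.{u} R)) (hX : IsSmallObject X) :
    HBounded X :=
  hX _ hbounded_thick ⟨0, fun n hn => hom_single_zero _ 0 n (by omega)⟩

theorem small_hom_fp (hcoh : IsLeftCoherentRing R)
    (X : DerivedCategory (ModuleCat.{u} R)) (hX : IsSmallObject X) (n : ℤ) :
    Module.FinitePresentation R ((DerivedCategory.homologyFunctor (ModuleCat.{u} R) n).obj X) := by
  have hne : (finPresModules R).Nonempty :=
    ⟨ModuleCat.of R R, inferInstanceAs (Module.FinitePresentation R R)⟩
  refine hX _ (hom_wide_thick (fp_isWide hcoh) hne) (fun k => ?_) n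
  by_cases hk : k = 0
  · subst hk
    exact (fp_isWide hcoh).mem_of_iso (hom_single _ 0).some.symm
      (inferInstanceAs (Module.FinitePresentation R R))
  · exact wide_zero (fp_isWide hcoh) hne _ (hom_single_zero _ 0 k hk)

/-- truncation lemma for small objects. -/
theorem small_of_homology (E : Set (DerivedCategory (ModuleCat.{u} R)))
    (hiso : ∀ {X Y : DerivedCategory (ModuleCat.{u} R)}, (X ≅ Y) → X ∈ E → Y ∈ E)
    (hext : ∀ T' ∈ distTriang (DerivedCategory (ModuleCat.{u} R)),
      T'.obj₁ ∈ E → T'.obj₃ ∈ E → T'.obj₂ ∈ E)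
    (X : DerivedCategory (ModuleCat.{u} R)) (hX : IsSmallObject X)
    (h : ∀ n, (DerivedCategory.singleFunctor (ModuleCat.{u} R) n).obj ((DerivedCategory.homologyFunctor (ModuleCat.{u} R) n).obj X) ∈ E) :
    X ∈ E := by
  obtain ⟨b, hb⟩ := small_hbounded X hX
  exact trunc_lemma E hiso hext (2 * b) (-b) X (fun n hn => hb n (by omega)) h

end

/-- complexes of f.g. projectives, bounded above -/
structure PerfCx {R : Type u} [CommRing R] (K : CochainComplex (ModuleCat.{u} R) ℤ) : Prop where
  proj : ∀ n, Module.Projective R (K.X n)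
  fin : ∀ n, Module.Finite R (K.X n)
  bdd : ∃ d : ℤ, ∀ n, d < n → IsZero (K.X n)

theorem PerfCx.shift {R : Type u} [CommRing R] {K : CochainComplex (ModuleCat.{u} R) ℤ}
    (h : PerfCx K) (a : ℤ) : PerfCx (K⟦a⟧) where
  proj n := h.proj (n + a)
  fin n := h.fin (n + a)
  bdd := by
    obtain ⟨d, hd⟩ := h.bdd
    exact ⟨d - a, fun n hn => hd (n + a) (by omega)⟩

theorem proj_fin_of_iso {R : Type u} [CommRing R] {M N : ModuleCat.{u} R} (e : M ≅ N)
    (h : Module.Projective R M ∧ Module.Finite R M) :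
    Module.Projective R N ∧ Module.Finite R N := by
  obtain ⟨h1, h2⟩ := h
  exact ⟨Module.Projective.of_equiv e.toLinearEquiv, Module.Finite.equiv e.toLinearEquiv⟩

theorem proj_fin_biprod {R : Type u} [CommRing R] {M N : ModuleCat.{u} R}
    (h : Module.Projective R M ∧ Module.Finite R M)
    (h' : Module.Projective R N ∧ Module.Finite R N) :
    Module.Projective R (M ⊞ N : ModuleCat.{u} R) ∧ Module.Finite R (M ⊞ N : ModuleCat.{u} R) := by
  obtain ⟨h1, h2⟩ := h
  obtain ⟨h1', h2'⟩ := h'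
  have e := (ModuleCat.biprodIsoProd M N)
  refine proj_fin_of_iso e.symm ⟨?_, ?_⟩
  · exact inferInstanceAs (Module.Projective R (M × N))
  · exact inferInstanceAs (Module.Finite R (M × N))

theorem PerfCx.cone {R : Type u} [CommRing R] {K L : CochainComplex (ModuleCat.{u} R) ℤ}
    (hK : PerfCx K) (hL : PerfCx L) (φ : K ⟶ L) : PerfCx (CochainComplex.mappingCone φ) := by
  have e : ∀ n, (CochainComplex.mappingCone φ).X n ≅ K.X (n+1) ⊞ L.X n := fun n =>
    HomologicalComplex.homotopyCofiber.XIsoBiprod φ n (n+1) rfl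
  have hpf : ∀ n, Module.Projective R ((CochainComplex.mappingCone φ).X n) ∧
      Module.Finite R ((CochainComplex.mappingCone φ).X n) := fun n =>
    proj_fin_of_iso (e n).symm (proj_fin_biprod ⟨hK.proj _, hK.fin _⟩ ⟨hL.proj _, hL.fin _⟩)
  obtain ⟨d, hd⟩ := hK.bdd
  obtain ⟨d', hd'⟩ := hL.bdd
  refine ⟨fun n => (hpf n).1, fun n => (hpf n).2, max d d', fun n hn => ?_⟩
  refine IsZero.of_iso ?_ (e n)
  rw [biprod_isZero_iff]
  exact ⟨hd _ (by omega), hd' _ (by omega)⟩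

theorem PerfCx.kproj {R : Type u} [CommRing R] {K : CochainComplex (ModuleCat.{u} R) ℤ}
    (hK : PerfCx K) : K.IsKProjective := by
  obtain ⟨d, hd⟩ := hK.bdd
  have : K.IsStrictlyLE d := (CochainComplex.isStrictlyLE_iff K d).2 hd
  have : ∀ n, Projective (K.X n) := fun n => by
    have := hK.proj n
    exact (IsProjective.iff_projective (K.X n)).1 this
  exact CochainComplex.isKProjective_of_projective K d

section
variable {R : Type u} [CommRing R] [HasDerivedCategory.{w} (ModuleCat.{u} R)]

theorem PerfCx.lift {K L : CochainComplex (ModuleCat.{u} R) ℤ} (hK : PerfCx K)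
    (f : DerivedCategory.Q.obj K ⟶ DerivedCategory.Q.obj L) :
    ∃ φ : K ⟶ L, DerivedCategory.Q.map φ = f := by
  have := hK.kproj
  obtain ⟨g, hg⟩ := (CochainComplex.IsKProjective.Qh_map_bijective K
    ((HomotopyCategory.quotient _ _).obj L)).surjective
    ((DerivedCategory.quotientCompQhIso _).hom.app K ≫ f ≫
      (DerivedCategory.quotientCompQhIso _).inv.app L)
  obtain ⟨φ, rfl⟩ := (HomotopyCategory.quotient _ _).map_surjective g
  refine ⟨φ, ?_⟩
  have h2 := (DerivedCategory.quotientCompQhIso (ModuleCat.{u} R)).hom.naturality φ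
  rw [Functor.comp_map, hg] at h2
  rw [← cancel_epi ((DerivedCategory.quotientCompQhIso (ModuleCat.{u} R)).hom.app K), ← h2]
  simp

/-- objects with a perfect representative -/
def perfSet (R : Type u) [CommRing R] [HasDerivedCategory.{w} (ModuleCat.{u} R)] :
    Set (DerivedCategory (ModuleCat.{u} R)) :=
  {Y | ∃ K : CochainComplex (ModuleCat.{u} R) ℤ, PerfCx K ∧
    Nonempty (DerivedCategory.Q.obj K ≅ Y)}

theorem perf_iso {X Y : DerivedCategory (ModuleCat.{u} R)} (e : X ≅ Y) (h : X ∈ perfSet R) :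
    Y ∈ perfSet R := by
  obtain ⟨K, hK, ⟨e'⟩⟩ := h
  exact ⟨K, hK, ⟨e' ≪≫ e⟩⟩

theorem perf_shift {X : DerivedCategory (ModuleCat.{u} R)} (h : X ∈ perfSet R) (n : ℤ) :
    X⟦n⟧ ∈ perfSet R := by
  obtain ⟨K, hK, ⟨e'⟩⟩ := h
  exact ⟨K⟦n⟧, hK.shift n, ⟨(DerivedCategory.Q.commShiftIso n).app K ≪≫
    (shiftFunctor _ n).mapIso e'⟩⟩

theorem perf_of_shift {X : DerivedCategory (ModuleCat.{u} R)} (n : ℤ) (h : X⟦n⟧ ∈ perfSet R) :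
    X ∈ perfSet R :=
  perf_iso (shiftShiftNeg X n) (perf_shift h (-n))

theorem perf_cone (T' : Triangle (DerivedCategory (ModuleCat.{u} R)))
    (hT : T' ∈ distTriang (DerivedCategory (ModuleCat.{u} R)))
    (h1 : T'.obj₁ ∈ perfSet R) (h2 : T'.obj₂ ∈ perfSet R) : T'.obj₃ ∈ perfSet R := by
  obtain ⟨K, hK, ⟨e₁⟩⟩ := h1
  obtain ⟨L, hL, ⟨e₂⟩⟩ := h2
  obtain ⟨φ, hφ⟩ := hK.lift (e₁.hom ≫ T'.mor₁ ≫ e₂.inv)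
  refine ⟨_, hK.cone hL φ, ⟨?_⟩⟩
  exact Triangle.π₃.mapIso (isoTriangleOfIso₁₂ _ T'
    (DerivedCategory.mappingCone_triangle_distinguished φ) hT e₁ e₂ (by
      change DerivedCategory.Q.map φ ≫ e₂.hom = e₁.hom ≫ T'.mor₁
      rw [hφ]; simp))

theorem perf_ext₂ (T' : Triangle (DerivedCategory (ModuleCat.{u} R)))
    (hT : T' ∈ distTriang (DerivedCategory (ModuleCat.{u} R)))
    (h1 : T'.obj₁ ∈ perfSet R) (h3 : T'.obj₃ ∈ perfSet R) : T'.obj₂ ∈ perfSet R :=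
  perf_cone _ (inv_rot_of_distTriang _ hT) (perf_shift h3 (-1)) h1

theorem perf_proj (P : ModuleCat.{u} R) (h1 : Module.Projective R P) (h2 : Module.Finite R P) :
    sg P ∈ perfSet R := by
  refine ⟨(CochainComplex.singleFunctor _ 0).obj P, ?_, ⟨Iso.refl _⟩⟩
  have hz : ∀ n : ℤ, n ≠ 0 → IsZero (((CochainComplex.singleFunctor _ 0).obj P).X n) := fun n hn =>
    HomologicalComplex.isZero_single_obj_X _ _ _ _ hn
  have hpf : ∀ n : ℤ, Module.Projective R (((CochainComplex.singleFunctor _ 0).obj P).X n) ∧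
      Module.Finite R (((CochainComplex.singleFunctor _ 0).obj P).X n) := by
    intro n
    by_cases hn : n = 0
    · subst hn
      exact proj_fin_of_iso (HomologicalComplex.singleObjXSelf (ComplexShape.up ℤ) 0 P).symm
        ⟨h1, h2⟩
    · have := ModuleCat.subsingleton_of_isZero (hz n hn)
      exact ⟨inferInstance, inferInstance⟩
  exact ⟨fun n => (hpf n).1, fun n => (hpf n).2, 0, fun n hn => hz n hn.ne'⟩

theorem perf_fp (hcoh : IsLeftCoherentRing R)
    (hreg : ∀ M : ModuleCat.{u} R, Module.FinitePresentation R M →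
      HasFiniteProjectiveDimension R M)
    (M : ModuleCat.{u} R) (hM : Module.FinitePresentation R M) : sg M ∈ perfSet R := by
  refine fp_induction hcoh hreg (fun M => sg M ∈ perfSet R) ?_ ?_ M hM
  · exact fun P h1 h2 => perf_proj P h1 h2
  · exact fun S hS h1 h2 h => perf_cone _ hS.singleTriangle_distinguished h (perf_proj _ h1 h2)

theorem perf_small (hcoh : IsLeftCoherentRing R)
    (hreg : ∀ M : ModuleCat.{u} R, Module.FinitePresentation R M →
      HasFiniteProjectiveDimension R M)
    (X : DerivedCategory (ModuleCat.{u} R)) (hX : IsSmallObject X) : X ∈ perfSet R := by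
  refine small_of_homology (perfSet R) perf_iso perf_ext₂ X hX (fun n => ?_)
  have h := perf_fp hcoh hreg _ (small_hom_fp hcoh X hX n)
  have e := ((DerivedCategory.singleFunctors (ModuleCat.{u} R)).shiftIso n 0 n (by simp)).app
    ((DerivedCategory.homologyFunctor (ModuleCat.{u} R) n).obj X)
  exact perf_of_shift n (perf_iso e.symm h)

end

section
variable {R : Type u} [CommRing R]

open MonoidalCategory in
/-- the functor `L ↦ K ⊗ L`. -/
noncomputable def tF (K : CochainComplex (ModuleCat.{u} R) ℤ) :
    ModuleCat.{u} R ⥤ CochainComplex (ModuleCat.{u} R) ℤ where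
  obj L :=
    { X := fun n => K.X n ⊗ L
      d := fun i j => K.d i j ▷ L
      shape := fun i j h => by rw [K.shape i j h]; simp
      d_comp_d' := fun i j k _ _ => by rw [← comp_whiskerRight, K.d_comp_d]; simp }
  map f :=
    { f := fun n => K.X n ◁ f
      comm' := fun i j _ => whisker_exchange _ _ }
  map_id L := by ext n : 1; simp
  map_comp f g := by ext n : 1; simp

open MonoidalCategory in
theorem tF_shortExact {K : CochainComplex (ModuleCat.{u} R) ℤ}
    (hK : ∀ n, Module.Projective R (K.X n))
    (S : ShortComplex (ModuleCat.{u} R)) (hS : S.ShortExact) :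
    ∃ w, (ShortComplex.mk ((tF K).map S.f) ((tF K).map S.g) w).ShortExact := by
  have w : (tF K).map S.f ≫ (tF K).map S.g = 0 := by
    ext n : 1
    change K.X n ◁ S.f ≫ K.X n ◁ S.g = 0
    rw [← whiskerLeft_comp, S.zero]; simp
  refine ⟨w, ?_⟩
  apply HomologicalComplex.shortExact_of_degreewise_shortExact
  intro n
  have := hK n
  apply ModuleCat.shortComplex_shortExact
  · have h := (ShortComplex.ShortExact.moduleCat_exact_iff_function_exact S).1 hS.exact
    exact lTensor_exact (K.X n) h hS.moduleCat_surjective_g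
  · exact Module.Flat.lTensor_preserves_injective_linearMap (M := K.X n) S.f.hom
      hS.moduleCat_injective_f
  · exact LinearMap.lTensor_surjective (K.X n) hS.moduleCat_surjective_g

open MonoidalCategory in
/-- `K ⊗ R ≅ K`. -/
noncomputable def tF_unit (K : CochainComplex (ModuleCat.{u} R) ℤ) :
    (tF K).obj (ModuleCat.of R R) ≅ K :=
  HomologicalComplex.Hom.isoOfComponents (fun n => ρ_ (K.X n))
    (fun i j _ => (rightUnitor_naturality (K.d i j)).symm)

variable [HasDerivedCategory.{w} (ModuleCat.{u} R)]
  {D : Set (DerivedCategory (ModuleCat.{u} R))}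

theorem tF_pi_mem (hD : IsThickSubcategory D) {K : CochainComplex (ModuleCat.{u} R) ℤ}
    (hK : ∀ n, Module.Projective R (K.X n))
    (h : DerivedCategory.Q.obj K ∈ D) (n : ℕ) :
    DerivedCategory.Q.obj ((tF K).obj (ModuleCat.of R (Fin n → R))) ∈ D := by
  induction n with
  | zero =>
    apply thick_of_isZero hD
    refine Functor.map_isZero _ ?_
    rw [IsZero.iff_id_eq_zero]
    ext n : 1
    apply IsZero.eq_of_src
    exact @ModuleCat.isZero_of_subsingleton _ _ _
      (inferInstanceAs (Subsingleton (TensorProduct R (K.X n) (Fin 0 → R))))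
  | succ n ih =>
    let S : ShortComplex (ModuleCat.{u} R) := ShortComplex.mk
      (ModuleCat.ofHom (LinearMap.inl R R (Fin n → R)))
      (ModuleCat.ofHom (LinearMap.snd R R (Fin n → R))) (by ext; rfl)
    have hS : S.ShortExact := by
      apply ModuleCat.shortComplex_shortExact
      · exact Function.Exact.inl_snd
      · exact LinearMap.inl_injective
      · exact LinearMap.snd_surjective
    obtain ⟨w, hw⟩ := tF_shortExact hK S hS
    have := hD.ext₂ _ (DerivedCategory.triangleOfSES_distinguished hw)
      (hD.mem_of_iso (DerivedCategory.Q.mapIso (tF_unit K).symm) h) ih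
    refine hD.mem_of_iso (DerivedCategory.Q.mapIso ((tF K).mapIso ?_)) this
    exact (LinearEquiv.toModuleIso (Fin.consLinearEquiv R (fun _ : Fin (n+1) => R)))

theorem tF_proj_mem (hD : IsThickSubcategory D) {K : CochainComplex (ModuleCat.{u} R) ℤ}
    (hK : ∀ n, Module.Projective R (K.X n))
    (h : DerivedCategory.Q.obj K ∈ D) 
    (P : ModuleCat.{u} R) (h1 : Module.Projective R P) (h2 : Module.Finite R P) :
    DerivedCategory.Q.obj ((tF K).obj P) ∈ D := by
  obtain ⟨n, f, g, -, -, hfg⟩ := Module.Finite.exists_comp_eq_id_of_projective R P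
  refine hD.retract_mem _ _
    ((tF K ⋙ DerivedCategory.Q).map (ModuleCat.ofHom g))
    ((tF K ⋙ DerivedCategory.Q).map (ModuleCat.ofHom f)) ?_
    (tF_pi_mem hD hK h n)
  rw [← Functor.map_comp, ← ModuleCat.ofHom_comp, hfg]
  exact CategoryTheory.Functor.map_id _ _

theorem tF_fp_mem (hcoh : IsLeftCoherentRing R)
    (hreg : ∀ M : ModuleCat.{u} R, Module.FinitePresentation R M →
      HasFiniteProjectiveDimension R M)
    (hD : IsThickSubcategory D) {K : CochainComplex (ModuleCat.{u} R) ℤ}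
    (hK : ∀ n, Module.Projective R (K.X n))
    (h : DerivedCategory.Q.obj K ∈ D)
    (M : ModuleCat.{u} R) (hM : Module.FinitePresentation R M) :
    DerivedCategory.Q.obj ((tF K).obj M) ∈ D := by
  refine fp_induction hcoh hreg (fun M => DerivedCategory.Q.obj ((tF K).obj M) ∈ D) ?_ ?_ M hM
  · exact fun P h1 h2 => tF_proj_mem hD hK h P h1 h2
  · intro S hS h1 h2 h'
    obtain ⟨w, hw⟩ := tF_shortExact hK S hS
    exact thick_ext₃ hD _ (DerivedCategory.triangleOfSES_distinguished hw) h'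
      (tF_proj_mem hD hK h _ h1 h2)

end

section LemmaL

variable {R : Type u} [CommRing R] (p : Ideal R) [p.IsPrime]

open TensorProduct

theorem resField_surj (x : p.ResidueField) :
    ∃ t : R, t ∉ p ∧ ∃ a : R, algebraMap R p.ResidueField a = t • x := by
  obtain ⟨a, b, hb, rfl⟩ := IsFractionRing.div_surjective (A := R ⧸ p) x
  obtain ⟨a, rfl⟩ := Ideal.Quotient.mk_surjective a
  obtain ⟨b, rfl⟩ := Ideal.Quotient.mk_surjective b
  have hb' : b ∉ p := by
    intro h
    rw [Ideal.Quotient.eq_zero_iff_mem.2 h] at hb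
    exact zero_notMem_nonZeroDivisors hb
  refine ⟨b, hb', a, ?_⟩
  have e : ∀ r : R, algebraMap (R ⧸ p) p.ResidueField (Ideal.Quotient.mk p r) =
    algebraMap R p.ResidueField r := fun r => rfl
  have hb0 : algebraMap R p.ResidueField b ≠ 0 := fun h =>
    hb' (Ideal.algebraMap_residueField_eq_zero.1 h)
  rw [e, e, Algebra.smul_def]
  field_simp

theorem tens_surj {A : Type u} [AddCommGroup A] [Module R A] (v : p.ResidueField ⊗[R] A) :
    ∃ t : R, t ∉ p ∧ ∃ a : A, (1 : p.ResidueField) ⊗ₜ[R] a = t • v := by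
  induction v with
  | zero => exact ⟨1, p.ne_top_iff_one.1 (Ideal.IsPrime.ne_top ‹_›), 0, by simp⟩
  | tmul x a =>
    obtain ⟨t, ht, r, hr⟩ := resField_surj p x
    refine ⟨t, ht, r • a, ?_⟩
    rw [TensorProduct.tmul_smul, TensorProduct.smul_tmul',
      TensorProduct.smul_tmul', ← hr, Algebra.smul_def, mul_one]
  | add x y hx hy =>
    obtain ⟨t, ht, a, ha⟩ := hx
    obtain ⟨s, hs, b, hb⟩ := hy
    refine ⟨t * s, fun h => (Ideal.IsPrime.mem_or_mem ‹_› h).elim ht hs, s • a + t • b, ?_⟩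
    rw [TensorProduct.tmul_add, TensorProduct.tmul_smul, TensorProduct.tmul_smul, ha, hb,
      smul_add, smul_smul, smul_smul, mul_comm s t]

theorem tens_ker {A : Type u} [AddCommGroup A] [Module R A] [Module.Finite R A]
    [Module.Projective R A] (a : A) (h : (1 : p.ResidueField) ⊗ₜ[R] a = 0) :
    a ∈ p • (⊤ : Submodule R A) := by
  obtain ⟨n, f, g, -, -, hfg⟩ := Module.Finite.exists_comp_eq_id_of_projective R A
  have h1 : ∀ i, g a i ∈ p := by
    intro i
    have := congrArg (LinearMap.baseChange p.ResidueField ((LinearMap.proj i).comp g)) h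
    rw [LinearMap.baseChange_tmul, map_zero] at this
    have := congrArg (TensorProduct.rid R p.ResidueField) this
    rw [TensorProduct.rid_tmul, map_zero, Algebra.smul_def, mul_one] at this
    exact Ideal.algebraMap_residueField_eq_zero.1 this
  have h2 : a = f (g a) := (LinearMap.congr_fun hfg a).symm
  rw [h2, pi_eq_sum_univ' (g a), map_sum]
  refine Submodule.sum_mem _ fun i _ => ?_
  rw [map_smul]
  exact Submodule.smul_mem_smul (h1 i) trivial

theorem lift_up {A B V : Type u} [AddCommGroup A] [Module R A] [AddCommGroup B] [Module R B]
    [AddCommGroup V] [Module R V] [Module.Finite R B] [Module.Projective R B]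
    (j : A →ₗ[R] V) (hj : ∀ v, ∃ t : R, t ∉ p ∧ ∃ a, j a = t • v) (f : B →ₗ[R] V) :
    ∃ t : R, t ∉ p ∧ ∃ h : B →ₗ[R] A, ∀ b, j (h b) = t • f b := by
  obtain ⟨n, π, σ, -, -, hπ⟩ := Module.Finite.exists_comp_eq_id_of_projective R B
  choose t ht a ha using fun i : Fin n => hj (f (π (Pi.single i 1)))
  let T := ∏ i, t i
  have hT : T ∉ p := fun h => by
    obtain ⟨i, -, hi⟩ := (Ideal.IsPrime.prod_mem_iff).1 h
    exact ht i hi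
  have hdiv : ∀ i, ∃ s, T = s * t i := fun i => by
    obtain ⟨s, hs⟩ := Finset.dvd_prod_of_mem t (Finset.mem_univ i)
    exact ⟨s, by rw [mul_comm]; exact hs⟩
  choose s hs using hdiv
  let h0 : (Fin n → R) →ₗ[R] A := Fintype.linearCombination R (fun i => s i • a i)
  have key : ∀ x, j (h0 x) = T • f (π x) := by
    intro x
    have : j.comp h0 = T • (f.comp π) := by
      apply (Pi.basisFun R (Fin n)).ext
      intro i
      simp only [Pi.basisFun_apply, LinearMap.comp_apply, LinearMap.smul_apply, h0]
      rw [Fintype.linearCombination_apply_single, one_smul, map_smul, ha, smul_smul, ← hs]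
    exact LinearMap.congr_fun this x
  refine ⟨T, hT, h0.comp σ, fun b => ?_⟩
  rw [LinearMap.comp_apply, key]
  congr 2
  exact LinearMap.congr_fun hπ b

theorem gen_inv {k V W : Type*} [Field k] [AddCommGroup V] [Module k V] [AddCommGroup W]
    [Module k W] (f : V →ₗ[k] W) : ∃ g : W →ₗ[k] V, ∀ v, f (g (f v)) = f v := by
  obtain ⟨s, hs⟩ := f.rangeRestrict.exists_rightInverse_of_surjective f.range_rangeRestrict
  obtain ⟨g, hg⟩ := s.exists_extend
  refine ⟨g, fun v => ?_⟩
  have h1 : g (f v) = s (f.rangeRestrict v) := LinearMap.congr_fun hg (f.rangeRestrict v)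
  have h2 := LinearMap.congr_fun hs (f.rangeRestrict v)
  rw [h1]
  exact congrArg Subtype.val h2

theorem contract {A B C : Type*} {k : Type*} [Field k] [AddCommGroup A] [Module k A]
    [AddCommGroup B] [Module k B] [AddCommGroup C] [Module k C]
    (d : A →ₗ[k] B) (d' : B →ₗ[k] C) (hex : ∀ z, d' z = 0 → ∃ x, d x = z) :
    ∃ (h : B →ₗ[k] A) (h' : C →ₗ[k] B), ∀ b, d (h b) + h' (d' b) = b := by
  obtain ⟨g, hg⟩ := gen_inv d'
  obtain ⟨u, hu⟩ := gen_inv d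
  refine ⟨u.comp (LinearMap.id - g.comp d'), g, fun b => ?_⟩
  simp only [LinearMap.comp_apply, LinearMap.sub_apply, LinearMap.id_apply]
  obtain ⟨x, hx⟩ := hex (b - g (d' b)) (by rw [map_sub, hg, sub_self])
  rw [← hx, hu, hx, sub_add_cancel]

theorem nak {A B C : Type u} [AddCommGroup A] [Module R A] [AddCommGroup B] [Module R B]
    [AddCommGroup C] [Module R C] [Module.Finite R B]
    (d : A →ₗ[R] B) (d' : B →ₗ[R] C) (hdd : ∀ x, d' (d x) = 0)
    (h : B →ₗ[R] A) (h' : C →ₗ[R] B) (a : R) (ha : a ∉ p)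
    (hθ : ∀ b, (d (h b) + h' (d' b)) - a • b ∈ p • (⊤ : Submodule R B)) :
    ∃ s : R, s ∉ p ∧ ∀ z, d' z = 0 → s • z ∈ LinearMap.range d := by
  let θ : Module.End R B := d.comp h + h'.comp d'
  let η : Module.End R B := θ - algebraMap R _ a
  have hη : LinearMap.range η ≤ p • (⊤ : Submodule R B) := by
    rintro _ ⟨b, rfl⟩
    exact hθ b
  obtain ⟨f, hf, -, hcoef, hf0⟩ :=
    LinearMap.exists_monic_and_natDegree_eq_and_coeff_mem_pow_and_aeval_eq_zero R η p hη
  let g : Polynomial R := f.comp (Polynomial.X - Polynomial.C a)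
  have hg : Polynomial.aeval θ g = 0 := by
    rw [Polynomial.aeval_comp]
    simp only [map_sub, Polynomial.aeval_X, Polynomial.aeval_C]
    exact hf0
  have hs0 : g.coeff 0 = f.eval (-a) := by
    rw [Polynomial.coeff_zero_eq_eval_zero]
    simp [g]
  have hinv : ∀ (q : Polynomial R) (x : A), Polynomial.aeval θ q (d x) ∈ LinearMap.range d := by
    intro q
    induction q using Polynomial.induction_on' with
    | add q r hq hr =>
      intro x
      rw [map_add, LinearMap.add_apply]
      exact add_mem (hq x) (hr x)
    | monomial n c =>
      intro x
      rw [Polynomial.aeval_monomial]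
      have : ∀ (n : ℕ) (x : A), (θ ^ n) (d x) ∈ LinearMap.range d := by
        intro n
        induction n with
        | zero => intro x; exact ⟨x, rfl⟩
        | succ n ih =>
          intro x
          rw [pow_succ, Module.End.mul_apply]
          have : θ (d x) = d (h (d x)) := by
            change d (h (d x)) + h' (d' (d x)) = _
            rw [hdd, map_zero, add_zero]
          rw [this]
          exact ih _
      rw [Module.End.mul_apply]
      exact Submodule.smul_mem _ c (this n x)
  refine ⟨g.coeff 0, ?_, fun z hz => ?_⟩
  · rw [hs0, Polynomial.eval_eq_sum_range, Finset.sum_range_succ, hf.coeff_natDegree, one_mul]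
    intro hmem
    have h1 : ∑ i ∈ Finset.range f.natDegree, f.coeff i * (-a) ^ i ∈ p := by
      refine Ideal.sum_mem _ fun i hi => Ideal.mul_mem_right _ _ ?_
      have := Finset.mem_range.1 hi
      exact Ideal.pow_le_self (by omega) (hcoef i)
    have h2 := (Ideal.add_mem_iff_right p h1).1 hmem
    have h3 := Ideal.IsPrime.mem_of_pow_mem ‹_› _ h2
    exact ha (by simpa using p.neg_mem h3)
  · have h1 : Polynomial.aeval θ g z = 0 := by rw [hg]; rfl
    rw [← Polynomial.divX_mul_X_add g, map_add, map_mul, Polynomial.aeval_X, Polynomial.aeval_C,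
      LinearMap.add_apply, Module.End.mul_apply] at h1
    have h2 : θ z = d (h z) := by
      change d (h z) + h' (d' z) = _
      rw [hz, map_zero, add_zero]
    rw [h2] at h1
    have h3 := eq_neg_of_add_eq_zero_right h1
    have h4 : g.coeff 0 • z = -(Polynomial.aeval θ g.divX (d (h z))) := h3
    rw [h4]
    exact neg_mem (hinv _ _)

theorem lemmaL {A B C : Type u} [AddCommGroup A] [Module R A] [AddCommGroup B] [Module R B]
    [AddCommGroup C] [Module R C] [Module.Finite R B] [Module.Projective R B]
    [Module.Finite R C] [Module.Projective R C]
    (d : A →ₗ[R] B) (d' : B →ₗ[R] C) (hdd : ∀ x, d' (d x) = 0)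
    (hno : ∀ s : R, s ∉ p → ∃ z, d' z = 0 ∧ s • z ∉ LinearMap.range d) :
    ∃ (e : B) (φ : B →ₗ[R] R), d' e ∈ p • (⊤ : Submodule R C) ∧ (∀ x, φ (d x) ∈ p) ∧
      φ e ∉ p := by
  let k := p.ResidueField
  let jA : A →ₗ[R] k ⊗[R] A := TensorProduct.mk R k A 1
  let jB : B →ₗ[R] k ⊗[R] B := TensorProduct.mk R k B 1
  let jC : C →ₗ[R] k ⊗[R] C := TensorProduct.mk R k C 1
  let D : k ⊗[R] A →ₗ[k] k ⊗[R] B := d.baseChange k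
  let D' : k ⊗[R] B →ₗ[k] k ⊗[R] C := d'.baseChange k
  have hD : ∀ x, D (jA x) = jB (d x) := fun x => LinearMap.baseChange_tmul _ _ _
  have hD' : ∀ x, D' (jB x) = jC (d' x) := fun x => LinearMap.baseChange_tmul _ _ _
  by_cases hex : ∀ z, D' z = 0 → ∃ x, D x = z
  · exfalso
    obtain ⟨h, h', hh⟩ := contract D D' hex
    obtain ⟨t, ht, m, hm⟩ := lift_up p jA (tens_surj p) ((h.restrictScalars R).comp jB)
    obtain ⟨t', ht', m', hm'⟩ := lift_up p jB (tens_surj p) ((h'.restrictScalars R).comp jC)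
    obtain ⟨s, hs, hs'⟩ := nak p d d' hdd (t' • m) (t • m') (t' * t)
      (fun h => (Ideal.IsPrime.mem_or_mem ‹_› h).elim ht' ht) (fun b => by
        apply tens_ker p
        change jB _ = 0
        simp only [LinearMap.smul_apply, map_smul, map_sub, map_add]
        rw [hm', ← hD, hm]
        simp only [LinearMap.comp_apply, LinearMap.restrictScalars_apply]
        rw [← hD']
        rw [LinearMap.map_smul_of_tower, smul_smul, smul_smul, mul_comm t t', ← smul_add, hh, sub_self])
    obtain ⟨z, hz, hz'⟩ := hno s hs
    exact hz' (hs' z hz)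
  · push Not at hex
    obtain ⟨z, hz, hz'⟩ := hex
    have hz'' : z ∉ LinearMap.range D := fun ⟨x, hx⟩ => hz' x hx
    obtain ⟨ψ, hψ, hψ'⟩ := Submodule.exists_dual_map_eq_bot_of_notMem hz'' inferInstance
    have hψ0 : ∀ x, ψ (D x) = 0 := fun x => by
      have : ψ (D x) ∈ Submodule.map ψ (LinearMap.range D) := ⟨_, ⟨x, rfl⟩, rfl⟩
      rw [hψ'] at this
      exact this
    obtain ⟨t, ht, e, he⟩ := tens_surj p z
    obtain ⟨t', ht', φ, hφ⟩ := lift_up p (Algebra.linearMap R k) (resField_surj p)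
      ((ψ.restrictScalars R).comp jB)
    refine ⟨e, φ, ?_, fun x => ?_, fun hmem => ?_⟩
    · apply tens_ker p
      change jC (d' e) = 0
      rw [← hD']
      change D' (1 ⊗ₜ e) = 0
      rw [he, LinearMap.map_smul_of_tower, hz, smul_zero]
    · rw [← Ideal.algebraMap_residueField_eq_zero]
      have := hφ (d x)
      simp only [LinearMap.comp_apply, LinearMap.restrictScalars_apply] at this
      rw [← hD, hψ0, smul_zero] at this
      exact this
    · rw [← Ideal.algebraMap_residueField_eq_zero] at hmem
      have := hφ e
      simp only [LinearMap.comp_apply, LinearMap.restrictScalars_apply] at this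
      have h2 : jB e = t • z := he
      rw [h2, LinearMap.map_smul_of_tower, Algebra.linearMap_apply, hmem, Algebra.smul_def,
        Algebra.smul_def] at this
      have := this.symm
      rw [mul_eq_zero, mul_eq_zero] at this
      rcases this with h | h | h
      · exact ht' (Ideal.algebraMap_residueField_eq_zero.1 h)
      · exact ht (Ideal.algebraMap_residueField_eq_zero.1 h)
      · exact hψ h

end LemmaL

section
variable {R : Type u} [CommRing R]

theorem fg_sup_aux (J' p A : Ideal R) (hJ : J'.FG) (h : J' ≤ p ⊔ A) :
    ∃ J₁ : Ideal R, J₁.FG ∧ J₁ ≤ p ∧ J' ≤ J₁ ⊔ A := by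
  obtain ⟨s, rfl⟩ := hJ
  have h' : ∀ x ∈ s, ∃ y ∈ p, ∃ z ∈ A, y + z = x := fun x hx =>
    Submodule.mem_sup.1 (h (Submodule.subset_span hx))
  choose! y hy z hz hyz using h'
  classical
  refine ⟨Ideal.span (s.image y : Finset R), ⟨_, rfl⟩, ?_, ?_⟩
  · rw [Ideal.span_le]
    intro t ht
    simp only [Finset.coe_image, Set.mem_image] at ht
    obtain ⟨x, hx, rfl⟩ := ht
    exact hy x hx
  · refine Submodule.span_le.2 ?_
    intro x hx
    change x ∈ _
    rw [← hyz x hx]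
    refine Submodule.add_mem_sup (Submodule.subset_span ?_) (hz x hx)
    simp only [Finset.coe_image, Set.mem_image]
    exact ⟨x, hx, rfl⟩

theorem fg_smul_aux {C : Type u} [AddCommGroup C] [Module R C] (p : Ideal R) (c : C)
    (h : c ∈ p • (⊤ : Submodule R C)) :
    ∃ J₁ : Ideal R, J₁.FG ∧ J₁ ≤ p ∧ c ∈ J₁ • (⊤ : Submodule R C) := by
  refine Submodule.smul_induction_on h ?_ ?_
  · intro r hr n _
    refine ⟨Ideal.span {r}, ⟨{r}, by simp⟩, by simpa [Ideal.span_le] using hr, ?_⟩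
    exact Submodule.smul_mem_smul (Ideal.mem_span_singleton_self r) trivial
  · rintro x y ⟨J, hJ, hJp, hx⟩ ⟨J', hJ', hJp', hy⟩
    refine ⟨J ⊔ J', Submodule.FG.sup hJ hJ', sup_le hJp hJp', ?_⟩
    exact Submodule.add_mem _ (Submodule.smul_mono_left le_sup_left hx)
      (Submodule.smul_mono_left le_sup_right hy)

/-- homology is killed by `s` if cycles times `s` are boundaries. -/
theorem hom_killed (K : CochainComplex (ModuleCat.{u} R) ℤ) (n : ℤ) (s : R)
    (h : ∀ z, (K.d n (n + 1)).hom z = 0 → s • z ∈ LinearMap.range (K.d (n - 1) n).hom)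
    (x : K.homology n) : s • x = 0 := by
  obtain ⟨c, rfl⟩ := (ModuleCat.epi_iff_surjective (K.homologyπ n)).1 inferInstance x
  obtain ⟨y, hy⟩ := h ((K.iCycles n).hom c) (by
    have := K.iCycles_d n (n + 1)
    exact congr($(this).hom c))
  have h2 : s • c = (K.toCycles (n - 1) n).hom y := by
    apply (ModuleCat.mono_iff_injective (K.iCycles n)).1 inferInstance
    have := congr(($(K.toCycles_i (n - 1) n)).hom y)
    rw [map_smul]
    exact hy.symm.trans this.symm
  have h3 : (K.homologyπ n).hom (s • c) = 0 := by
    rw [h2]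
    exact congr(($(K.toCycles_comp_homologyπ (n - 1) n)).hom y)
  rw [← h3, map_smul]

open MonoidalCategory TensorProduct in
theorem tens_maps (K : CochainComplex (ModuleCat.{u} R) ℤ) (N : ModuleCat.{u} R)
    (J : Ideal R) (hJN : J ≤ Module.annihilator R N)
    (e : K.X 0) (φ : K.X 0 →ₗ[R] R)
    (he : (K.d 0 1).hom e ∈ J • (⊤ : Submodule R (K.X 1)))
    (hφ : ∀ x, φ ((K.d (-1) 0).hom x) ∈ J) :
    ∃ (i : (HomologicalComplex.single (ModuleCat.{u} R) (ComplexShape.up ℤ) 0).obj N ⟶ (tF K).obj N)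
      (r : (tF K).obj N ⟶ (HomologicalComplex.single (ModuleCat.{u} R) (ComplexShape.up ℤ) 0).obj N),
      i ≫ r = (HomologicalComplex.single (ModuleCat.{u} R) (ComplexShape.up ℤ) 0).map
        (ModuleCat.ofHom (LinearMap.lsmul R N (φ e))) := by
  let i0 : N ⟶ ((tF K).obj N).X 0 := ModuleCat.ofHom (TensorProduct.mk R (K.X 0) N e)
  let r0 : ((tF K).obj N).X 0 ⟶ N := ModuleCat.ofHom (TensorProduct.lift ((LinearMap.lsmul R N).comp φ))
  have hi0 : ∀ k, (ComplexShape.up ℤ).Rel 0 k → i0 ≫ ((tF K).obj N).d 0 k = 0 := by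
    intro k hk
    obtain rfl : k = 1 := by simpa using hk.symm
    ext y
    change (K.d 0 1).hom e ⊗ₜ[R] y = 0
    refine Submodule.smul_induction_on (p := fun c => c ⊗ₜ[R] y = 0) he ?_ ?_
    · intro r hr c _
      rw [TensorProduct.smul_tmul, Module.mem_annihilator.1 (hJN hr), TensorProduct.tmul_zero]
    · intro c c' h h'
      rw [TensorProduct.add_tmul, h, h', add_zero]
  have hr0 : ∀ k, (ComplexShape.up ℤ).Rel k 0 → ((tF K).obj N).d k 0 ≫ r0 = 0 := by
    intro k hk
    obtain rfl : k = -1 := by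
      have : k + 1 = 0 := hk
      omega
    apply ModuleCat.hom_ext
    apply TensorProduct.ext'
    intro x y
    change φ ((K.d (-1) 0).hom x) • y = 0
    exact Module.mem_annihilator.1 (hJN (hφ x)) y
  refine ⟨HomologicalComplex.mkHomFromSingle i0 hi0, HomologicalComplex.mkHomToSingle r0 hr0, ?_⟩
  apply HomologicalComplex.from_single_hom_ext
  rw [HomologicalComplex.comp_f, HomologicalComplex.mkHomFromSingle_f,
    HomologicalComplex.mkHomToSingle_f, HomologicalComplex.single_map_f_self]
  rw [Category.assoc, ← Category.assoc i0]
  congr 1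

variable [HasDerivedCategory.{w} (ModuleCat.{u} R)]
  {D : Set (DerivedCategory (ModuleCat.{u} R))}

theorem coneIn_lin (hD : IsThickSubcategory D) {N N' : Type u} [AddCommGroup N] [Module R N]
    [AddCommGroup N'] [Module R N'] (f : N →ₗ[R] N')
    (h1 : sg (ModuleCat.of R (LinearMap.ker f)) ∈ D)
    (h2 : sg (ModuleCat.of R (N' ⧸ LinearMap.range f)) ∈ D) :
    ConeIn D ((DerivedCategory.singleFunctor (ModuleCat.{u} R) 0).map (ModuleCat.ofHom f)) := by
  let S₁ : ShortComplex (ModuleCat.{u} R) := ShortComplex.mk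
    (ModuleCat.ofHom (LinearMap.ker f).subtype) (ModuleCat.ofHom f.rangeRestrict) (by
      ext x
      exact x.2)
  have hS₁ : S₁.ShortExact := by
    apply ModuleCat.shortComplex_shortExact
    · intro x
      change f.rangeRestrict x = 0 ↔ x ∈ Set.range (LinearMap.ker f).subtype
      simp [Subtype.ext_iff]
      rfl
    · exact Subtype.val_injective
    · exact f.surjective_rangeRestrict
  let S₂ : ShortComplex (ModuleCat.{u} R) := ShortComplex.mk
    (ModuleCat.ofHom (LinearMap.range f).subtype) (ModuleCat.ofHom (LinearMap.range f).mkQ) (by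
      ext x
      exact (Submodule.Quotient.mk_eq_zero _).2 x.2)
  have hS₂ : S₂.ShortExact := by
    apply ModuleCat.shortComplex_shortExact
    · intro x
      change (LinearMap.range f).mkQ x = 0 ↔ x ∈ Set.range (LinearMap.range f).subtype
      simp
      rfl
    · exact Subtype.val_injective
    · exact Submodule.mkQ_surjective _
  have := (sg_ses_coneIn_g hD S₁ hS₁ h1).comp hD (sg_ses_coneIn_f S₂ hS₂ h2)
  rw [← Functor.map_comp] at this
  exact this

theorem sg_sub_quot (hD : IsThickSubcategory D) {N : Type u} [AddCommGroup N] [Module R N]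
    (N' : Submodule R N) (h1 : sg (ModuleCat.of R N') ∈ D)
    (h2 : sg (ModuleCat.of R (N ⧸ N')) ∈ D) : sg (ModuleCat.of R N) ∈ D := by
  let S₂ : ShortComplex (ModuleCat.{u} R) := ShortComplex.mk
    (ModuleCat.ofHom N'.subtype) (ModuleCat.ofHom N'.mkQ) (by
      ext x
      exact (Submodule.Quotient.mk_eq_zero _).2 x.2)
  have hS₂ : S₂.ShortExact := by
    apply ModuleCat.shortComplex_shortExact
    · intro x
      change N'.mkQ x = 0 ↔ x ∈ Set.range N'.subtype
      simp
    · exact Subtype.val_injective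
    · exact Submodule.mkQ_surjective _
  exact sg_ses₂ hD S₂ hS₂ h1 h2

theorem sg_zero (hD : IsThickSubcategory D) (N : Type u) [AddCommGroup N] [Module R N]
    [Subsingleton N] : sg (ModuleCat.of R N) ∈ D :=
  thick_of_isZero hD _ (Functor.map_isZero _ (ModuleCat.isZero_of_subsingleton _))

/-- all f.p. modules supported on `V(J)` are in `D` -/
def PIn (D : Set (DerivedCategory (ModuleCat.{u} R))) (J : Ideal R) : Prop :=
  ∀ (N : Type u) [AddCommGroup N] [Module R N], Module.FinitePresentation R N →
    J ≤ (Module.annihilator R N).radical → sg (ModuleCat.of R N) ∈ D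

theorem PIn.mono {J I : Ideal R} (h : PIn D J) (hJ : J ≤ I) : PIn D I :=
  fun N _ _ hN hI => h N hN (hJ.trans hI)

theorem PIn.top (hD : IsThickSubcategory D) : PIn D (⊤ : Ideal R) := by
  intro N _ _ hN h
  have h1 : Module.annihilator R N = ⊤ := Ideal.radical_eq_top.1 (top_le_iff.1 h)
  have : Subsingleton N := Module.annihilator_eq_top_iff.1 h1
  exact sg_zero hD N

theorem ann_le_sub {N : Type u} [AddCommGroup N] [Module R N] (N' : Submodule R N) :
    Module.annihilator R N ≤ Module.annihilator R N' :=
  N'.subtype.annihilator_le_of_injective Subtype.val_injective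

theorem ann_le_quot {N : Type u} [AddCommGroup N] [Module R N] (N' : Submodule R N) :
    Module.annihilator R N ≤ Module.annihilator R (N ⧸ N') :=
  N'.mkQ.annihilator_le_of_surjective (Submodule.mkQ_surjective _)

theorem smul_quot_ann {N : Type u} [AddCommGroup N] [Module R N] (N' : Submodule R N) (a : R)
    (h : ∀ x : N, a • x ∈ N') : a ∈ Module.annihilator R (N ⧸ N') := by
  rw [Module.mem_annihilator]
  intro q
  obtain ⟨x, rfl⟩ := N'.mkQ_surjective q
  rw [← map_smul]
  exact (Submodule.Quotient.mk_eq_zero _).2 (h x)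

theorem PIn.mul (hcoh : IsLeftCoherentRing R) (hD : IsThickSubcategory D) (J : Ideal R) (a b : R)
    (ha : PIn D (J ⊔ Ideal.span {a})) (hb : PIn D (J ⊔ Ideal.span {b})) :
    PIn D (J ⊔ Ideal.span {a * b}) := by
  intro N _ _ hN hJ
  obtain ⟨m, hm⟩ := (le_sup_right.trans hJ) (Ideal.mem_span_singleton_self (a * b))
  let N' := LinearMap.range (LinearMap.lsmul R N (a ^ m))
  have hfg : N'.FG := Submodule.FG.map _ Module.Finite.fg_top |> fun h => by
    rw [show N' = Submodule.map _ ⊤ from LinearMap.range_eq_map _]; exact h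
  have hJ1 : J ≤ (Module.annihilator R N).radical := le_sup_left.trans hJ
  refine sg_sub_quot hD N' (hb N' (coh_fp_sub hcoh N' hfg) (sup_le ?_ ?_))
    (ha _ (coh_fp_quot N' hfg) (sup_le ?_ ?_))
  · exact hJ1.trans (Ideal.radical_mono (ann_le_sub N'))
  · rw [Ideal.span_singleton_le_iff_mem]
    refine ⟨m, ?_⟩
    rw [Module.mem_annihilator]
    rintro ⟨_, y, rfl⟩
    apply Subtype.ext
    change b ^ m • a ^ m • y = 0
    rw [smul_smul, mul_comm, ← mul_pow]
    exact Module.mem_annihilator.1 hm y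
  · exact hJ1.trans (Ideal.radical_mono (ann_le_quot N'))
  · rw [Ideal.span_singleton_le_iff_mem]
    exact ⟨m, smul_quot_ann N' _ (fun x => ⟨x, rfl⟩)⟩

theorem PIn.of_ann (hcoh : IsLeftCoherentRing R) (hD : IsThickSubcategory D) (J : Ideal R)
    (hJ : J.FG) (h : ∀ (N : Type u) [AddCommGroup N] [Module R N],
      Module.FinitePresentation R N → J ≤ Module.annihilator R N → sg (ModuleCat.of R N) ∈ D) :
    PIn D J := by
  have key : ∀ (k : ℕ) (N : Type u) [AddCommGroup N] [Module R N],
      Module.FinitePresentation R N → J ^ k ≤ Module.annihilator R N →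
      sg (ModuleCat.of R N) ∈ D := by
    intro k
    induction k with
    | zero =>
      intro N _ _ hN hk
      rw [pow_zero, Ideal.one_eq_top, top_le_iff] at hk
      have : Subsingleton N := Module.annihilator_eq_top_iff.1 hk
      exact sg_zero hD N
    | succ k ih =>
      intro N _ _ hN hk
      let N' : Submodule R N := J • ⊤
      have hfg : N'.FG := Submodule.FG.smul hJ Module.Finite.fg_top
      refine sg_sub_quot hD N' (ih N' (coh_fp_sub hcoh N' hfg) ?_)
        (h _ (coh_fp_quot N' hfg) ?_)
      · intro r hr
        rw [Module.mem_annihilator]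
        rintro ⟨x, hx⟩
        apply Subtype.ext
        change r • x = 0
        refine Submodule.smul_induction_on (p := fun x => r • x = 0) hx ?_ ?_
        · intro j hj n _
          rw [smul_smul]
          refine Module.mem_annihilator.1 (hk ?_) n
          rw [pow_succ]
          exact Ideal.mul_mem_mul hr hj
        · intro x y hx hy
          rw [smul_add, hx, hy, add_zero]
      · intro r hr
        exact smul_quot_ann N' r (fun x => Submodule.smul_mem_smul hr trivial)
  intro N _ _ hN hle
  obtain ⟨k, hk⟩ := Ideal.exists_pow_le_of_le_radical_of_fg hle hJ
  exact key k N hN hk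

theorem key_step (hcoh : IsLeftCoherentRing R)
    (hreg : ∀ M : ModuleCat.{u} R, Module.FinitePresentation R M →
      HasFiniteProjectiveDimension R M)
    (hD : IsThickSubcategory D) (p : Ideal R) [p.IsPrime]
    (X : DerivedCategory (ModuleCat.{u} R)) (hXD : X ∈ D) (hX : IsSmallObject X)
    (hno : ∀ s ∉ p, ¬ ∀ h : (DerivedCategory.homologyFunctor (ModuleCat.{u} R) 0).obj X,
      s • h = 0) :
    ∃ (J : Ideal R) (a : R), J.FG ∧ J ≤ p ∧ a ∉ p ∧ ∀ J' : Ideal R, J'.FG → J ≤ J' →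
      PIn D (J' ⊔ Ideal.span {a}) → PIn D J' := by
  obtain ⟨K, hK, ⟨eK⟩⟩ := perf_small hcoh hreg X hX
  have hKD : DerivedCategory.Q.obj K ∈ D := hD.mem_of_iso eK.symm hXD
  have := hK.fin
  have := hK.proj
  have hL := lemmaL p (K.d (-1) 0).hom (K.d 0 1).hom
    (fun x => congr(($(K.d_comp_d (-1) 0 1)).hom x)) (by
      intro s hs
      by_contra hc
      push Not at hc
      apply hno s hs
      intro h
      let ee : (DerivedCategory.homologyFunctor (ModuleCat.{u} R) 0).obj X ≅ K.homology 0 :=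
        (DerivedCategory.homologyFunctor (ModuleCat.{u} R) 0).mapIso eK.symm ≪≫
        (DerivedCategory.homologyFunctorFactors (ModuleCat.{u} R) 0).app K
      apply ee.toLinearEquiv.injective
      rw [map_zero, map_smul]
      exact hom_killed K 0 s hc _)
  obtain ⟨e, φ, he, hφ, ha⟩ := hL
  obtain ⟨J₁, hJ₁, hJ₁p, heJ⟩ := fg_smul_aux p _ he
  let J₂ : Ideal R := LinearMap.range (φ ∘ₗ (K.d (-1) 0).hom)
  have hJ₂ : J₂.FG := by
    change (LinearMap.range (φ ∘ₗ (K.d (-1) 0).hom)).FG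
    rw [LinearMap.range_eq_map]
    exact Submodule.FG.map _ Module.Finite.fg_top
  refine ⟨J₁ ⊔ J₂, φ e, Submodule.FG.sup hJ₁ hJ₂, sup_le hJ₁p ?_, ha, ?_⟩
  · rintro _ ⟨x, rfl⟩
    exact hφ x
  intro J' hJ' hle hP
  apply PIn.of_ann hcoh hD J' hJ'
  intro N _ _ hN hann
  have hann' : J₁ ⊔ J₂ ≤ Module.annihilator R N := hle.trans hann
  obtain ⟨i, r, hir⟩ := tens_maps K (ModuleCat.of R N) (J₁ ⊔ J₂) hann' e φ
    (Submodule.smul_mono_left le_sup_left heJ) (fun x => le_sup_right (a := J₁) ⟨x, rfl⟩)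
  suffices hcone : ConeIn D ((DerivedCategory.singleFunctor (ModuleCat.{u} R) 0).map
      (ModuleCat.ofHom (LinearMap.lsmul R N (φ e)))) by
    have hQ := ConeIn.factor hD (DerivedCategory.Q.map i) (DerivedCategory.Q.map r)
      (tF_fp_mem hcoh hreg hD hK.proj hKD (ModuleCat.of R N) hN) (by
        rw [← CategoryTheory.Functor.map_comp, hir]
        exact hcone)
    exact hQ
  have hrange : (LinearMap.range (LinearMap.lsmul R N (φ e))).FG := by
    rw [LinearMap.range_eq_map]
    exact Submodule.FG.map _ Module.Finite.fg_top
  refine coneIn_lin hD (LinearMap.lsmul R N (φ e)) (hP _ (coh_fp_ker hcoh _) ?_)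
    (hP _ (coh_fp_quot _ hrange) ?_)
  · refine le_trans (sup_le (hann.trans (ann_le_sub _)) ?_) Ideal.le_radical
    rw [Ideal.span_singleton_le_iff_mem, Module.mem_annihilator]
    rintro ⟨x, hx⟩
    exact Subtype.ext hx
  · refine le_trans (sup_le (hann.trans (ann_le_quot _)) ?_) Ideal.le_radical
    rw [Ideal.span_singleton_le_iff_mem]
    exact smul_quot_ann _ _ (fun x => ⟨x, rfl⟩)

theorem key_thm (hcoh : IsLeftCoherentRing R)
    (hreg : ∀ M : ModuleCat.{u} R, Module.FinitePresentation R M →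
      HasFiniteProjectiveDimension R M)
    (hD : IsThickSubcategory D) (N : ModuleCat.{u} R) (hN : Module.FinitePresentation R N)
    (hsupp : ∀ p : Ideal R, p.IsPrime → Module.annihilator R N ≤ p →
      ∃ X ∈ D, IsSmallObject X ∧ ∃ n : ℤ, ∀ s ∉ p,
        ¬ ∀ h : (DerivedCategory.homologyFunctor (ModuleCat.{u} R) n).obj X, s • h = 0) :
    sg N ∈ D := by
  by_contra hcon
  let F : Set (Ideal R) := {J | ∀ J' : Ideal R, J'.FG → J' ≤ J → ¬ PIn D J'}
  have hI : Module.annihilator R N ∈ F := fun J' _ hle hP =>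
    hcon (hP N hN (hle.trans Ideal.le_radical))
  obtain ⟨p, hIp, hmax⟩ := zorn_le_nonempty₀ F (by
    intro c hc hchain y hy
    refine ⟨sSup c, ?_, fun z hz => le_sSup hz⟩
    intro J' hJ' hle
    have := (Submodule.fg_iff_compact J').1 hJ'
    rw [CompleteLattice.isCompactElement_iff_le_of_directed_sSup_le] at this
    obtain ⟨z, hz, hz'⟩ := this c ⟨y, hy⟩ hchain.directedOn hle
    exact hc hz J' hJ' hz') _ hI
  have hpF : p ∈ F := hmax.prop
  -- elements outside p
  have hout : ∀ a ∉ p, ∃ J : Ideal R, J.FG ∧ J ≤ p ∧ PIn D (J ⊔ Ideal.span {a}) := by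
    intro a ha
    have : p ⊔ Ideal.span {a} ∉ F := by
      intro h
      exact ha (hmax.le_of_ge h le_sup_left
        (le_sup_right (a := p) (Ideal.mem_span_singleton_self a)))
    change ¬ (∀ J' : Ideal R, J'.FG → J' ≤ p ⊔ Ideal.span {a} → ¬ PIn D J') at this
    simp only [not_forall, not_not] at this
    obtain ⟨J', hJ', hle, hP⟩ := this
    obtain ⟨J₁, h1, h2, h3⟩ := fg_sup_aux J' p _ hJ' hle
    exact ⟨J₁, h1, h2, hP.mono h3⟩
  have hfg1 : ∀ a : R, (Ideal.span {a}).FG := fun a => ⟨{a}, by simp⟩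
  have hprime : p.IsPrime := by
    refine ⟨?_, ?_⟩
    · rintro rfl
      exact hpF ⊤ ⟨{1}, by simp⟩ le_rfl (PIn.top hD)
    · intro a b hab
      by_contra hc
      push Not at hc
      obtain ⟨J, h1, h2, h3⟩ := hout a hc.1
      obtain ⟨J', h1', h2', h3'⟩ := hout b hc.2
      refine hpF ((J ⊔ J') ⊔ Ideal.span {a * b}) (Submodule.FG.sup (Submodule.FG.sup h1 h1') (hfg1 _))
        (sup_le (sup_le h2 h2') (by simpa [Ideal.span_singleton_le_iff_mem] using hab)) ?_
      exact PIn.mul hcoh hD _ a b (h3.mono (sup_le_sup_right le_sup_left _))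
        (h3'.mono (sup_le_sup_right le_sup_right _))
  obtain ⟨X, hXD, hX, n, hno⟩ := hsupp p hprime hIp
  obtain ⟨J, a, hJ, hJp, ha, hstep⟩ := key_step hcoh hreg hD p (X⟦n⟧) (hD.shift_mem _ n hXD)
    (small_isThick.shift_mem _ n hX) (by
      intro s hs hk
      apply hno s hs
      intro h
      have ee := (hom_shift_iso X n 0)
      rw [add_zero] at ee
      apply ee.some.symm.toLinearEquiv.injective
      rw [map_zero, map_smul]
      exact hk _)
  obtain ⟨J', h1, h2, h3⟩ := hout a ha
  refine hpF (J ⊔ J') (Submodule.FG.sup hJ h1) (sup_le hJp h2) (hstep _ (Submodule.FG.sup hJ h1) le_sup_left ?_)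
  exact h3.mono (sup_le_sup_right le_sup_right _)

end

section
variable {R : Type u} [CommRing R]

theorem ann_fg (hcoh : IsLeftCoherentRing R) (M : Type u) [AddCommGroup M] [Module R M]
    (hM : Module.FinitePresentation R M) : (Module.annihilator R M).FG := by
  obtain ⟨n, s, hs⟩ := Module.Finite.exists_fin (R := R) (M := M)
  let f : R →ₗ[R] (Fin n → M) := LinearMap.pi (fun i => LinearMap.toSpanSingleton R M (s i))
  have h := coh_fp_ker hcoh f
  have h2 : (LinearMap.ker f).FG := Module.Finite.iff_fg.1 inferInstance
  have h3 : Module.annihilator R M = LinearMap.ker f := by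
    ext r
    rw [Module.mem_annihilator, LinearMap.mem_ker]
    constructor
    · intro h
      funext i
      exact h (s i)
    · intro h m
      have hm : m ∈ Submodule.span R (Set.range s) := hs ▸ trivial
      refine Submodule.span_induction (p := fun m _ => r • m = 0) ?_ ?_ ?_ ?_ hm
      · rintro _ ⟨i, rfl⟩
        exact congrFun h i
      · simp
      · intro x y _ _ hx hy
        rw [smul_add, hx, hy, add_zero]
      · intro a x _ hx
        rw [smul_comm, hx, smul_zero]
  rw [h3]
  exact h2

theorem mem_sv_iff (S : Set (PrimeSpectrum R)) (M : ModuleCat.{u} R) :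
    M ∈ supportVanishing R S ↔ Module.FinitePresentation R M ∧
      ∀ p ∈ S, p ∉ Module.support R M := by
  change (_ ∧ _) ↔ _
  simp only [Module.notMem_support_iff]

theorem sv_wide (hcoh : IsLeftCoherentRing R) (S : Set (PrimeSpectrum R)) :
    supportVanishing R S ∈ wideLatticeFP R := by
  refine ⟨⟨?_, ?_, ?_, ?_⟩, ?_, fun M hM => hM.1⟩
  · intro X Y e hX
    rw [mem_sv_iff] at hX ⊢
    refine ⟨fp_of_iso e hX.1, fun p hp => ?_⟩
    rw [← e.toLinearEquiv.support_eq]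
    exact hX.2 p hp
  · intro X Y f hX hY
    rw [mem_sv_iff] at hX hY ⊢
    refine ⟨fp_kernel hcoh f hX.1 hY.1, fun p hp h => hX.2 p hp ?_⟩
    exact Module.support_subset_of_injective (kernel.ι f).hom
      ((ModuleCat.mono_iff_injective _).1 inferInstance) h
  · intro X Y f hX hY
    rw [mem_sv_iff] at hX hY ⊢
    refine ⟨fp_cokernel f hX.1 hY.1, fun p hp h => hY.2 p hp ?_⟩
    exact Module.support_subset_of_surjective (cokernel.π f).hom
      ((ModuleCat.epi_iff_surjective _).1 inferInstance) h
  · intro S' hS' h1 h3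
    rw [mem_sv_iff] at h1 h3 ⊢
    refine ⟨fp_ext S' hS' h1.1 h3.1, fun p hp h => ?_⟩
    rw [Module.support_of_exact (f := S'.f.hom) (g := S'.g.hom)
      ((ShortComplex.ShortExact.moduleCat_exact_iff_function_exact S').1 hS'.exact)
      hS'.moduleCat_injective_f hS'.moduleCat_surjective_g] at h
    rcases h with h | h
    · exact h1.2 p hp h
    · exact h3.2 p hp h
  · refine ⟨ModuleCat.of R PUnit.{u+1}, ?_⟩
    rw [mem_sv_iff]
    have : Subsingleton (ModuleCat.of R PUnit.{u+1}) := inferInstanceAs (Subsingleton PUnit)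
    refine ⟨inferInstance, fun p hp => ?_⟩
    rw [Module.support_eq_empty]
    exact fun h => h

theorem sv_order (S T : Set (PrimeSpectrum R)) (hS : S ∈ tildeJ R) :
    supportVanishing R S ⊆ supportVanishing R T ↔ T ⊆ S := by
  constructor
  · intro h t ht
    obtain ⟨𝒰, hU, rfl⟩ := hS
    intro U hUU
    by_contra htU
    obtain ⟨I, hI, rfl⟩ := PrimeSpectrum.isCompact_isOpen_iff_ideal.1
      ⟨(hU U hUU).2, (hU U hUU).1⟩
    have hsupp : Module.support R (R ⧸ I) = PrimeSpectrum.zeroLocus I := by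
      rw [Module.support_eq_zeroLocus, Ideal.annihilator_quotient]
    have hmem : ModuleCat.of R (R ⧸ I) ∈ supportVanishing R (⋂₀ 𝒰) := by
      rw [mem_sv_iff]
      refine ⟨coh_fp_quot I hI, fun p hp hp' => ?_⟩
      change p ∈ Module.support R (R ⧸ I) at hp'
      rw [hsupp] at hp'
      exact hp _ hUU hp'
    have h2 := ((mem_sv_iff _ _).1 (h hmem)).2 t ht
    change t ∉ Module.support R (R ⧸ I) at h2
    rw [hsupp] at h2
    exact htU h2
  · intro h M hM
    exact ⟨hM.1, fun p hp => hM.2 p (h hp)⟩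

variable [HasDerivedCategory.{w} (ModuleCat.{u} R)]
  {D : Set (DerivedCategory (ModuleCat.{u} R))}

theorem key_mod (hcoh : IsLeftCoherentRing R)
    (hreg : ∀ M : ModuleCat.{u} R, Module.FinitePresentation R M →
      HasFiniteProjectiveDimension R M)
    (hD : IsThickSubcategory D) (N : ModuleCat.{u} R) (hN : Module.FinitePresentation R N)
    (hsupp : ∀ p : Ideal R, p.IsPrime → Module.annihilator R N ≤ p →
      ∃ M : ModuleCat.{u} R, Module.FinitePresentation R M ∧ sg M ∈ D ∧
        Module.annihilator R M ≤ p) : sg N ∈ D := by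
  apply key_thm hcoh hreg hD N hN
  intro p hp hle
  obtain ⟨M, hM, hMD, hMp⟩ := hsupp p hp hle
  refine ⟨sg M, hMD, sg_fp_small hcoh hreg M hM, 0, fun s hs hk => hs (hMp ?_)⟩
  rw [Module.mem_annihilator]
  intro m
  apply (hom_single M 0).some.symm.toLinearEquiv.injective
  rw [map_zero, map_smul]
  exact hk _

theorem fSet_thick {C : Set (ModuleCat.{u} R)} (hC : IsWideSubcategory C) (hne : C.Nonempty) :
    fSet (R := R) C ∈ thickLatticeSmall R := by
  have h1 := small_isThick (R := R)
  have h2 := hom_wide_thick hC hne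
  refine ⟨⟨?_, ?_, ?_, ?_, ?_⟩, fun X hX => hX.1⟩
  · exact fun e h => ⟨h1.mem_of_iso e h.1, h2.mem_of_iso e h.2⟩
  · exact ⟨h1.zero_mem, h2.zero_mem⟩
  · exact fun X n h => ⟨h1.shift_mem X n h.1, h2.shift_mem X n h.2⟩
  · exact fun T' hT h h' => ⟨h1.ext₂ T' hT h.1 h'.1, h2.ext₂ T' hT h.2 h'.2⟩
  · exact fun X Y i r hir h => ⟨h1.retract_mem X Y i r hir h.1, h2.retract_mem X Y i r hir h.2⟩

theorem sg_mem_fSet (hcoh : IsLeftCoherentRing R)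
    (hreg : ∀ M : ModuleCat.{u} R, Module.FinitePresentation R M →
      HasFiniteProjectiveDimension R M)
    {C : Set (ModuleCat.{u} R)} (hC : C ∈ wideLatticeFP R) (M : ModuleCat.{u} R) :
    sg M ∈ fSet (R := R) C ↔ M ∈ C := by
  constructor
  · intro h
    exact hC.1.mem_of_iso (hom_single M 0).some (h.2 0)
  · intro h
    refine ⟨sg_fp_small hcoh hreg M (hC.2.2 h), fun n => ?_⟩
    by_cases hn : n = 0
    · subst hn
      exact hC.1.mem_of_iso (hom_single M 0).some.symm h
    · exact wide_zero hC.1 hC.2.1 _ (hom_single_zero M 0 n hn)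

theorem f_surj (hcoh : IsLeftCoherentRing R)
    (hreg : ∀ M : ModuleCat.{u} R, Module.FinitePresentation R M →
      HasFiniteProjectiveDimension R M)
    (hD : D ∈ thickLatticeSmall R) : ∃ C ∈ wideLatticeFP R, fSet C = D := by
  obtain ⟨hT, hsm⟩ := hD
  let C : Set (ModuleCat.{u} R) := {M | Module.FinitePresentation R M ∧ sg M ∈ D}
  refine ⟨C, ⟨⟨?_, ?_, ?_, ?_⟩, ?_, fun M hM => hM.1⟩, ?_⟩
  · intro X Y e hX
    exact ⟨fp_of_iso e hX.1, hT.mem_of_iso (Functor.mapIso _ e) hX.2⟩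
  · intro X Y f hX hY
    have hfp := fp_kernel hcoh f hX.1 hY.1
    refine ⟨hfp, key_mod hcoh hreg hT _ hfp (fun p hp hle => ⟨X, hX.1, hX.2, ?_⟩)⟩
    exact ((kernel.ι f).hom.annihilator_le_of_injective
      ((ModuleCat.mono_iff_injective _).1 inferInstance)).trans hle
  · intro X Y f hX hY
    have hfp := fp_cokernel f hX.1 hY.1
    refine ⟨hfp, key_mod hcoh hreg hT _ hfp (fun p hp hle => ⟨Y, hY.1, hY.2, ?_⟩)⟩
    exact ((cokernel.π f).hom.annihilator_le_of_surjective
      ((ModuleCat.epi_iff_surjective _).1 inferInstance)).trans hle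
  · intro S hS h1 h3
    exact ⟨fp_ext S hS h1.1 h3.1, sg_ses₂ hT S hS h1.2 h3.2⟩
  · exact ⟨ModuleCat.of R PUnit.{u+1}, inferInstanceAs (Module.FinitePresentation R PUnit.{u+1}),
      sg_zero hT PUnit.{u+1}⟩
  · ext X
    constructor
    · rintro ⟨hX, hH⟩
      exact small_of_homology D hT.mem_of_iso hT.ext₂ X hX
        (fun n => (single_mem_iff hT _ n).2 (hH n).2)
    · intro hXD
      have hX := hsm X hXD
      refine ⟨hX, fun n => ?_⟩
      have hfp := small_hom_fp hcoh X hX n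
      refine ⟨hfp, key_thm hcoh hreg hT _ hfp (fun p hp hle => ⟨X, hXD, hX, n, ?_⟩)⟩
      intro s hs hk
      exact hs (hle (Module.mem_annihilator.2 hk))

theorem sv_surj (hcoh : IsLeftCoherentRing R)
    (hreg : ∀ M : ModuleCat.{u} R, Module.FinitePresentation R M →
      HasFiniteProjectiveDimension R M)
    (C : Set (ModuleCat.{u} R)) (hC : C ∈ wideLatticeFP R) :
    ∃ S ∈ tildeJ R, supportVanishing R S = C := by
  let 𝒰 : Set (Set (PrimeSpectrum R)) := {U | ∃ M ∈ C, U = (Module.support R M)ᶜ}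
  refine ⟨⋂₀ 𝒰, ⟨𝒰, ?_, rfl⟩, ?_⟩
  · rintro U ⟨M, hM, rfl⟩
    have hfp : Module.FinitePresentation R M := hC.2.2 hM
    exact (PrimeSpectrum.isCompact_isOpen_iff_ideal.2
      ⟨Module.annihilator R M, ann_fg hcoh M hfp, by rw [Module.support_eq_zeroLocus]⟩).symm
  · ext N
    rw [mem_sv_iff]
    constructor
    · rintro ⟨hN, hsupp⟩
      rw [← sg_mem_fSet hcoh hreg hC]
      refine key_mod hcoh hreg (fSet_thick hC.1 hC.2.1).1 N hN (fun p hp hle => ?_)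
      by_contra hc
      push Not at hc
      refine hsupp ⟨p, hp⟩ ?_ ?_
      · rintro _ ⟨M, hM, rfl⟩ hs
        exact hc M (hC.2.2 hM) ((sg_mem_fSet hcoh hreg hC M).2 hM)
          (Module.annihilator_le_of_mem_support hs)
      · rw [Module.support_eq_zeroLocus]
        exact hle
    · intro hN
      exact ⟨hC.2.2 hN, fun p hp h => hp _ ⟨N, hN, rfl⟩ h⟩

end

/-- Theorem 3.6: for a regular commutative coherent ring `R`, the map
`f` is a lattice isomorphism from the lattice of wide subcategories of finitely presented
`R`-modules onto the lattice of thick subcategories of small objects of `D(R)`.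
Consequently the map `S ↦ {finitely presented M | M_{(p)} = 0 for all p ∈ S}` is an
isomorphism from `J̃(Spec R)`, with order reversed, onto the lattice of wide
subcategories of finitely presented `R`-modules. -/
theorem classification_regular_coherent (R : Type u) [CommRing R]
    [HasDerivedCategory.{w} (ModuleCat.{u} R)]
    (hcoh : IsLeftCoherentRing R)
    (hreg : ∀ M : ModuleCat.{u} R, Module.FinitePresentation R M →
      HasFiniteProjectiveDimension R M) :
    fIsLatticeIso R ∧
    (∀ S ∈ tildeJ R, supportVanishing R S ∈ wideLatticeFP R) ∧
    (∀ S ∈ tildeJ R, ∀ T ∈ tildeJ R,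
      (supportVanishing R S ⊆ supportVanishing R T ↔ T ⊆ S)) ∧
    (∀ C ∈ wideLatticeFP R, ∃ S ∈ tildeJ R, supportVanishing R S = C) := by
  refine ⟨⟨fun C hC => fSet_thick hC.1 hC.2.1, ?_, fun D hD => f_surj hcoh hreg hD⟩,
    fun S _ => sv_wide hcoh S, fun S hS T _ => sv_order S T hS, sv_surj hcoh hreg⟩
  intro C₁ h₁ C₂ h₂
  constructor
  · intro h M hM
    exact (sg_mem_fSet hcoh hreg h₂ M).1 (h ((sg_mem_fSet hcoh hreg h₁ M).2 hM))
  · exact fun h X hX => ⟨hX.1, fun n => h (hX.2 n)⟩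
end

section
/- Let R be a regular commutative coherent ring, C a wide subcategory of the finitely presented R-modules, and M ∈ C. If N is a finitely presented submodule or a finitely presented quotient module of M, then N ∈ C. In particular, if R is in addition Noetherian, then every wide subcategory of the finitely generated R-modules is a Serre class. -/
open CategoryTheory CategoryTheory.Limits CategoryTheory.Pretriangulated ZeroObject

universe w u

section Helpers

/-- every finitely generated submodule is finitely presented -/
def FGSubFP (R : Type u) [CommRing R] (X : Type u) [AddCommGroup X] [Module R X] : Prop :=
  ∀ L : Submodule R X, L.FG → Module.FinitePresentation R L

variable {R : Type u} [CommRing R]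
variable {X Y Z : Type u} [AddCommGroup X] [Module R X] [AddCommGroup Y] [Module R Y]
  [AddCommGroup Z] [Module R Z]

lemma FGSubFP.of_joint (f : X →ₗ[R] Y) (g : X →ₗ[R] Z)
    (h : ∀ x, f x = 0 → g x = 0 → x = 0) (hY : FGSubFP R Y) (hZ : FGSubFP R Z) :
    FGSubFP R X := by
  intro L hL
  have : Module.Finite R L := Module.Finite.iff_fg.mpr hL
  let l := (f ∘ₗ L.subtype).rangeRestrict
  have hl : Function.Surjective l := LinearMap.surjective_rangeRestrict _
  have h1 : Module.FinitePresentation R (LinearMap.range (f ∘ₗ L.subtype)) :=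
    hY _ (Module.Finite.iff_fg.mp inferInstance)
  have h2 : (LinearMap.ker l).FG := Module.FinitePresentation.fg_ker l hl
  have : Module.Finite R (LinearMap.ker l) := Module.Finite.iff_fg.mpr h2
  let k := g ∘ₗ L.subtype ∘ₗ (LinearMap.ker l).subtype
  have hk : Function.Injective k := by
    rw [injective_iff_map_eq_zero]
    rintro ⟨⟨x, hx⟩, hx'⟩ hx2
    have h3 : f x = 0 := congrArg Subtype.val (LinearMap.mem_ker.mp hx')
    have := h x h3 hx2
    subst this
    rfl
  have h4 : Module.FinitePresentation R (LinearMap.range k) :=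
    hZ _ (Module.Finite.iff_fg.mp inferInstance)
  have : Module.FinitePresentation R (LinearMap.ker l) :=
    .of_equiv (LinearEquiv.ofInjective k hk).symm
  exact Module.finitePresentation_of_ker l hl

lemma FGSubFP.free (hcoh : IsLeftCoherentRing R) (n : ℕ) : FGSubFP R (Fin n → R) := by
  induction n with
  | zero => intro L _; infer_instance
  | succ n ih =>
    refine FGSubFP.of_joint (LinearMap.proj (R := R) (φ := fun _ : Fin (n+1) => R) 0)
      (LinearMap.funLeft R R (Fin.succ : Fin n → Fin (n+1))) ?_ hcoh ih
    intro x h0 h1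
    funext i
    refine Fin.cases h0 (fun j => ?_) i
    exact congrFun h1 j

lemma FGSubFP.of_fp (hcoh : IsLeftCoherentRing R) [Module.FinitePresentation R X] :
    FGSubFP R X := by
  intro L hL
  obtain ⟨n, f, hf⟩ := Module.Finite.exists_fin' R X
  have hK : (LinearMap.ker f).FG := Module.FinitePresentation.fg_ker f hf
  let L' := L.comap f
  have hle : LinearMap.ker f ≤ L' := fun x hx => by
    simp [L', LinearMap.mem_ker.mp hx]
  have hL' : L'.FG := by
    apply Submodule.fg_of_fg_map_of_fg_inf_ker f
    · rwa [Submodule.map_comap_eq_of_surjective hf]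
    · rwa [inf_eq_right.mpr hle]
  have : Module.FinitePresentation R L' := FGSubFP.free hcoh n L' hL'
  let l : L' →ₗ[R] L := f.restrict (fun x hx => hx)
  refine Module.finitePresentation_of_surjective l ?_ ?_
  · rintro ⟨y, hy⟩
    obtain ⟨x, rfl⟩ := hf y
    exact ⟨⟨x, hy⟩, rfl⟩
  · apply Submodule.fg_of_fg_map_injective L'.subtype L'.subtype_injective
    convert hK
    ext x
    simp only [Submodule.mem_map, LinearMap.mem_ker]
    constructor
    · rintro ⟨y, hy, rfl⟩
      exact congrArg Subtype.val hy
    · intro hx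
      exact ⟨⟨x, hle hx⟩, Subtype.ext hx, rfl⟩

lemma fp_quot [Module.FinitePresentation R X] {K : Submodule R X} (hK : K.FG) :
    Module.FinitePresentation R (X ⧸ K) :=
  Module.finitePresentation_of_surjective K.mkQ K.mkQ_surjective (by rwa [Submodule.ker_mkQ])

variable {C : Set (ModuleCat.{u} R)}

namespace WideAux

lemma equiv (hC : IsWideSubcategory C) (e : X ≃ₗ[R] Y) (h : ModuleCat.of R X ∈ C) : ModuleCat.of R Y ∈ C :=
  hC.mem_of_iso e.toModuleIso h

lemma ker (hC : IsWideSubcategory C) (f : X →ₗ[R] Y) (hX : ModuleCat.of R X ∈ C) (hY : ModuleCat.of R Y ∈ C) :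
    ModuleCat.of R (LinearMap.ker f) ∈ C :=
  hC.mem_of_iso (ModuleCat.kernelIsoKer (ModuleCat.ofHom f)) (hC.kernel_mem _ hX hY)

lemma coker (hC : IsWideSubcategory C) (f : X →ₗ[R] Y) (hX : ModuleCat.of R X ∈ C) (hY : ModuleCat.of R Y ∈ C) :
    ModuleCat.of R (Y ⧸ LinearMap.range f) ∈ C :=
  hC.mem_of_iso (ModuleCat.cokernelIsoRangeQuotient (ModuleCat.ofHom f)) (hC.cokernel_mem _ hX hY)

lemma ext (hC : IsWideSubcategory C) (f : X →ₗ[R] Y) (hf : Function.Surjective f)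
    (hX : ModuleCat.of R (LinearMap.ker f) ∈ C) (hY : ModuleCat.of R Y ∈ C) :
    ModuleCat.of R X ∈ C :=
  hC.extension_mem _ (LinearMap.shortExact_shortComplexKer hf) hX hY

lemma of_quot (hC : IsWideSubcategory C) (K : Submodule R X) (hX : ModuleCat.of R X ∈ C)
    (hY : ModuleCat.of R (X ⧸ K) ∈ C) : ModuleCat.of R K ∈ C := by
  have := ker hC K.mkQ hX hY
  rwa [Submodule.ker_mkQ] at this

lemma range (hC : IsWideSubcategory C) (f : X →ₗ[R] Y) (hX : ModuleCat.of R X ∈ C) (hY : ModuleCat.of R Y ∈ C) :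
    ModuleCat.of R (LinearMap.range f) ∈ C :=
  of_quot hC _ hY (coker hC f hX hY)

lemma zero (hC : IsWideSubcategory C) (hX : ModuleCat.of R X ∈ C) [Subsingleton Y] : ModuleCat.of R Y ∈ C := by
  have h := ker hC (LinearMap.id : X →ₗ[R] X) hX hX
  rw [LinearMap.ker_id] at h
  exact equiv hC (default : (⊥ : Submodule R X) ≃ₗ[R] Y) h

lemma pi (hC : IsWideSubcategory C) (hX : ModuleCat.of R X ∈ C) (n : ℕ) : ModuleCat.of R (Fin n → X) ∈ C := by
  induction n with
  | zero => exact zero hC hX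
  | succ n ih =>
    let f : (Fin (n+1) → X) →ₗ[R] (Fin n → X) := LinearMap.funLeft R X (Fin.succ)
    have hf : Function.Surjective f :=
      LinearMap.funLeft_surjective_of_injective _ _ _ (Fin.succ_injective n)
    refine ext hC f hf ?_ ih
    let g : X →ₗ[R] LinearMap.ker f := (LinearMap.single R (fun _ : Fin (n+1) => X) 0).codRestrict _
      (fun x => by
        rw [LinearMap.mem_ker]
        funext i
        simp [f, LinearMap.funLeft_apply])
    refine equiv hC (LinearEquiv.ofBijective g ⟨?_, ?_⟩) hX
    · intro a b hab
      have := congrFun (congrArg Subtype.val hab) 0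
      simpa [g] using this
    · rintro ⟨y, hy⟩
      refine ⟨y 0, Subtype.ext (funext fun i => ?_)⟩
      refine Fin.cases ?_ (fun j => ?_) i
      · simp [g]
      · have := congrFun (LinearMap.mem_ker.mp hy) j
        simp only [f, LinearMap.funLeft_apply, Pi.zero_apply] at this
        simp [g, this]

lemma of_pi_succ (hC : IsWideSubcategory C) (n : ℕ) (hX : ModuleCat.of R (Fin (n+1) → X) ∈ C) : ModuleCat.of R X ∈ C := by
  have h := range hC (LinearMap.single R (fun _ : Fin (n+1) => X) 0 ∘ₗ
    LinearMap.proj (R := R) (φ := fun _ : Fin (n+1) => X) 0) hX hX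
  rw [LinearMap.range_comp, LinearMap.range_eq_top.mpr (LinearMap.proj_surjective 0),
    Submodule.map_top] at h
  exact equiv hC (LinearEquiv.ofInjective _ (fun a b hab => by
    have := congrFun hab 0
    simpa using this)).symm h

/-- quotient by `I M` -/
lemma quot_smul (hC : IsWideSubcategory C) (hX : ModuleCat.of R X ∈ C) {I : Ideal R} (hI : I.FG) :
    ModuleCat.of R (X ⧸ (I • ⊤ : Submodule R X)) ∈ C := by
  obtain ⟨n, a, rfl⟩ := Submodule.fg_iff_exists_fin_generating_family.mp hI
  have h := coker hC (∑ i, (a i) • (LinearMap.proj (R := R) (φ := fun _ : Fin n => X) i))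
    (pi hC hX n) hX
  convert h using 3 <;>
  · apply le_antisymm
    · rw [Submodule.smul_le]
      intro r hr m _
      refine Submodule.span_induction (p := fun r _ => r • m ∈ LinearMap.range _) ?_ ?_ ?_ ?_ hr
      · rintro _ ⟨i, rfl⟩
        refine ⟨Pi.single i m, ?_⟩
        simp [LinearMap.sum_apply, Pi.single_apply]
      · simp
      · intro x y _ _ hx hy
        rw [add_smul]; exact add_mem hx hy
      · intro c x _ hx
        rw [smul_assoc]; exact Submodule.smul_mem _ _ hx
    · rintro _ ⟨x, rfl⟩
      simp only [LinearMap.sum_apply, LinearMap.smul_apply, LinearMap.proj_apply]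
      exact Submodule.sum_mem _ fun i _ => Submodule.smul_mem_smul
        (Submodule.subset_span ⟨i, rfl⟩) trivial

lemma exists_surj {J : Ideal R} (hJ : ∀ r ∈ J, ∀ x : X, r • x = 0) [Module.Finite R X] :
    ∃ (n : ℕ) (f : (Fin n → R ⧸ J) →ₗ[R] X), Function.Surjective f := by
  obtain ⟨n, f, hf⟩ := Module.Finite.exists_fin' R X
  let g : Fin n → (R ⧸ J) →ₗ[R] X := fun i => Submodule.liftQ J
    (LinearMap.toSpanSingleton R X (f (Pi.single i 1))) (fun r hr => by simp [hJ r hr])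
  refine ⟨n, ∑ i, g i ∘ₗ LinearMap.proj i, fun x => ?_⟩
  obtain ⟨v, rfl⟩ := hf x
  refine ⟨fun i => Submodule.Quotient.mk (v i), ?_⟩
  conv_rhs => rw [LinearMap.pi_apply_eq_sum_univ f v]
  simp only [LinearMap.sum_apply, LinearMap.comp_apply, LinearMap.proj_apply]
  refine Finset.sum_congr rfl fun i _ => ?_
  simp only [g, Submodule.liftQ_apply, LinearMap.toSpanSingleton_apply]
  congr 2
  funext j
  simp [Pi.single_apply, eq_comm]

/-- finitely presented modules killed by `J` where `R/J ∈ C` -/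
lemma of_killed (hC : IsWideSubcategory C) {J : Ideal R} (hJC : ModuleCat.of R (R ⧸ J) ∈ C)
    (hJ : ∀ r ∈ J, ∀ x : X, r • x = 0) [Module.FinitePresentation R X] :
    ModuleCat.of R X ∈ C := by
  obtain ⟨n, f, hf⟩ := exists_surj hJ
  have h1 : (LinearMap.ker f).FG := Module.FinitePresentation.fg_ker f hf
  have : Module.Finite R (LinearMap.ker f) := Module.Finite.iff_fg.mpr h1
  obtain ⟨m, g, hg⟩ := exists_surj (X := LinearMap.ker f) (J := J) (by
    rintro r hr ⟨x, _⟩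
    apply Subtype.ext
    funext i
    obtain ⟨y, hy⟩ := Submodule.Quotient.mk_surjective J (x i)
    change r • x i = 0
    rw [← hy, ← Submodule.Quotient.mk_smul, Submodule.Quotient.mk_eq_zero]
    exact Ideal.mul_mem_right _ _ hr)
  have h2 := coker hC ((LinearMap.ker f).subtype ∘ₗ g) (pi hC hJC m) (pi hC hJC n)
  rw [LinearMap.range_comp, LinearMap.range_eq_top.mpr hg, Submodule.map_top,
    Submodule.range_subtype] at h2
  exact equiv hC (f.quotKerEquivOfSurjective hf) h2

lemma mono (hC : IsWideSubcategory C) {J K : Ideal R} (hJC : ModuleCat.of R (R ⧸ J) ∈ C) (h : J ≤ K) (hK : K.FG) :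
    ModuleCat.of R (R ⧸ K) ∈ C := by
  have : Module.FinitePresentation R (R ⧸ K) := fp_quot hK
  refine of_killed hC hJC fun r hr x => ?_
  obtain ⟨y, rfl⟩ := Submodule.Quotient.mk_surjective K x
  rw [← Submodule.Quotient.mk_smul, Submodule.Quotient.mk_eq_zero]
  exact Ideal.mul_mem_right _ _ (h hr)

lemma mul (hC : IsWideSubcategory C) (hcoh : IsLeftCoherentRing R) {J K : Ideal R} (hJ : J.FG) (hK : K.FG)
    (hJC : ModuleCat.of R (R ⧸ J) ∈ C) (hKC : ModuleCat.of R (R ⧸ K) ∈ C) :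
    ModuleCat.of R (R ⧸ (J * K)) ∈ C := by
  have i1 : Module.FinitePresentation R (R ⧸ (J * K)) := fp_quot (hJ.mul hK)
  have i2 : Module.FinitePresentation R (R ⧸ J) := fp_quot hJ
  let f : (R ⧸ (J * K)) →ₗ[R] (R ⧸ J) := Submodule.factor Ideal.mul_le_left
  have hf : Function.Surjective f := Submodule.factor_surjective _
  have i3 : Module.FinitePresentation R (LinearMap.ker f) :=
    FGSubFP.of_fp hcoh _ (Module.FinitePresentation.fg_ker f hf)
  refine ext hC f hf (of_killed hC hKC ?_) hJC
  rintro r hr ⟨x, hx⟩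
  apply Subtype.ext
  obtain ⟨y, rfl⟩ := Submodule.Quotient.mk_surjective _ x
  change r • Submodule.Quotient.mk y = 0
  rw [← Submodule.Quotient.mk_smul, Submodule.Quotient.mk_eq_zero]
  have : y ∈ J := (Submodule.Quotient.mk_eq_zero J).mp hx
  rw [smul_eq_mul, mul_comm r y]
  exact Ideal.mul_mem_mul this hr

lemma fg_sup_span {J : Ideal R} (hJ : J.FG) (s : R) : (J ⊔ Ideal.span {s}).FG :=
  Submodule.FG.sup hJ (Submodule.fg_span (Set.finite_singleton s))

/-- removing a finite set of elements one at a time -/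
lemma descend (hC : IsWideSubcategory C) (T : Finset R) (A : Ideal R) (s : R) (hcoh : IsLeftCoherentRing R)
    (hT : ∀ t ∈ T, ∀ J : Ideal R, J.FG → A ≤ J →
      ModuleCat.of R (R ⧸ (J ⊔ Ideal.span {s * t})) ∈ C → ModuleCat.of R (R ⧸ J) ∈ C) :
    ∀ J : Ideal R, J.FG → A ≤ J → ModuleCat.of R (R ⧸ (J ⊔ Ideal.span {s})) ∈ C →
      ModuleCat.of R (R ⧸ (J ⊔ Ideal.span (T : Set R))) ∈ C → ModuleCat.of R (R ⧸ J) ∈ C := by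
  classical
  induction T using Finset.induction_on with
  | empty =>
    intro J _ _ _ h
    rwa [Finset.coe_empty, Ideal.span_empty, sup_bot_eq] at h
  | insert t T _ ih =>
    intro J hJ hAJ hs h
    have hJ' := fg_sup_span hJ t
    have h1 : ModuleCat.of R (R ⧸ (J ⊔ Ideal.span {t})) ∈ C := by
      refine ih (fun t' ht' => hT t' (Finset.mem_insert_of_mem ht')) _ hJ'
        (hAJ.trans le_sup_left) ?_ ?_
      · exact mono hC hs (sup_le_sup_right le_sup_left _) (fg_sup_span hJ' s)
      · rw [Finset.coe_insert, Ideal.span_insert, ← sup_assoc] at h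
        exact h
    refine hT t (Finset.mem_insert_self _ _) J hJ hAJ ?_
    refine mono hC (mul hC hcoh (fg_sup_span hJ s) hJ' hs h1) ?_ (fg_sup_span hJ _)
    rw [Ideal.sup_mul, Ideal.mul_sup (Ideal.span {s}), Ideal.span_singleton_mul_span_singleton]
    exact sup_le (Ideal.mul_le_left.trans le_sup_left)
      (sup_le_sup_right Ideal.mul_le_right _)

lemma killed_mkQ {I J : Ideal R} (h : J ≤ I) (r : R) (hr : r ∈ J) (y : R ⧸ I) : r • y = 0 := by
  obtain ⟨y, rfl⟩ := Submodule.Quotient.mk_surjective I y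
  rw [← Submodule.Quotient.mk_smul, Submodule.Quotient.mk_eq_zero]
  exact Ideal.mul_mem_right _ _ (h hr)

lemma free_step (hC : IsWideSubcategory C) (hcoh : IsLeftCoherentRing R) [Module.FinitePresentation R X]
    (hM : ModuleCat.of R X ∈ C) (n : ℕ) (s : R) (x : Fin (n+1) → X)
    (hs : ∀ m : X, m ∈ (⊤ : Submodule R X) → s • m ∈ LinearMap.range (Fintype.linearCombination R x))
    (J I : Ideal R) (hI : I.FG) (hJI : J ≤ I)
    (hker : ∀ v, Fintype.linearCombination R x v = 0 → ∀ i, v i ∈ I)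
    (hJs : ModuleCat.of R (R ⧸ (J ⊔ Ideal.span {s})) ∈ C) :
    ModuleCat.of R (R ⧸ I) ∈ C := by
  let f0 := Fintype.linearCombination R x
  let W : Submodule R X := I • ⊤
  have hW : W.FG := Submodule.FG.smul hI Module.Finite.fg_top
  have hWC : ModuleCat.of R (X ⧸ W) ∈ C := quot_smul hC hM hI
  have i1 : Module.FinitePresentation R (X ⧸ W) := fp_quot hW
  have i2 : Module.FinitePresentation R (R ⧸ I) := fp_quot hI
  let g : Fin (n+1) → (R ⧸ I) →ₗ[R] (X ⧸ W) := fun i =>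
    Submodule.mapQ I W (LinearMap.toSpanSingleton R X (x i)) (fun r hr =>
      Submodule.smul_mem_smul hr trivial)
  let f : (Fin (n+1) → R ⧸ I) →ₗ[R] (X ⧸ W) := ∑ i, g i ∘ₗ LinearMap.proj i
  have hf : ∀ v : Fin (n+1) → R,
      f (fun i => Submodule.Quotient.mk (v i)) = Submodule.Quotient.mk (f0 v) := by
    intro v
    simp only [f, LinearMap.sum_apply, LinearMap.comp_apply, LinearMap.proj_apply, g,
      f0, Fintype.linearCombination_apply]
    exact (map_sum W.mkQ _ _).symm
  have hsW : ∀ m ∈ W, ∃ w : Fin (n+1) → R, (∀ i, w i ∈ I) ∧ f0 w = s • m := by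
    intro m hm
    induction hm using Submodule.smul_induction_on' with
    | smul r hr m hm =>
      obtain ⟨w, hw⟩ := hs m hm
      refine ⟨r • w, fun i => Ideal.mul_mem_right _ _ hr, ?_⟩
      rw [map_smul, hw, smul_comm]
    | add a _ b _ ha hb =>
      obtain ⟨w, hw, hw'⟩ := ha
      obtain ⟨z, hz, hz'⟩ := hb
      exact ⟨w + z, fun i => add_mem (hw i) (hz i), by rw [map_add, hw', hz', smul_add]⟩
  have hrfg : (LinearMap.range f).FG := Module.Finite.iff_fg.mp inferInstance
  have i3 : Module.FinitePresentation R ((X ⧸ W) ⧸ LinearMap.range f) := fp_quot hrfg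
  have i4 : Module.FinitePresentation R (LinearMap.range f) := FGSubFP.of_fp hcoh _ hrfg
  have hc : ModuleCat.of R ((X ⧸ W) ⧸ LinearMap.range f) ∈ C := by
    refine of_killed hC hJs ?_
    have : J ⊔ Ideal.span {s} ≤ Module.annihilator R ((X ⧸ W) ⧸ LinearMap.range f) := by
      refine sup_le (fun r hr => ?_) ?_
      · rw [Module.mem_annihilator]
        intro y
        obtain ⟨y, rfl⟩ := Submodule.Quotient.mk_surjective _ y
        obtain ⟨y, rfl⟩ := Submodule.Quotient.mk_surjective _ y
        rw [← Submodule.Quotient.mk_smul, ← Submodule.Quotient.mk_smul,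
          (Submodule.Quotient.mk_eq_zero W).mpr (Submodule.smul_mem_smul (hJI hr) trivial)]
        rfl
      · rw [Ideal.span_singleton_le_iff_mem, Module.mem_annihilator]
        intro y
        obtain ⟨y, rfl⟩ := Submodule.Quotient.mk_surjective _ y
        obtain ⟨y, rfl⟩ := Submodule.Quotient.mk_surjective _ y
        rw [← Submodule.Quotient.mk_smul, ← Submodule.Quotient.mk_smul,
          Submodule.Quotient.mk_eq_zero]
        obtain ⟨w, hw⟩ := hs y trivial
        exact ⟨_, by rw [← hw]; exact hf w⟩
    exact fun r hr y => Module.mem_annihilator.mp (this hr) y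
  have hr : ModuleCat.of R (LinearMap.range f) ∈ C := of_quot hC _ hWC hc
  have hkfg : (LinearMap.ker f).FG := by
    rw [← LinearMap.ker_rangeRestrict]
    exact Module.FinitePresentation.fg_ker _ (LinearMap.surjective_rangeRestrict f)
  have i5 : Module.FinitePresentation R (LinearMap.ker f) := FGSubFP.of_fp hcoh _ hkfg
  have hk : ModuleCat.of R (LinearMap.ker f) ∈ C := by
    refine of_killed hC hJs ?_
    have : J ⊔ Ideal.span {s} ≤ Module.annihilator R (LinearMap.ker f) := by
      refine sup_le (fun r hr => ?_) ?_
      · rw [Module.mem_annihilator]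
        rintro ⟨y, hy⟩
        apply Subtype.ext
        funext i
        exact killed_mkQ hJI r hr (y i)
      · rw [Ideal.span_singleton_le_iff_mem, Module.mem_annihilator]
        rintro ⟨y, hy⟩
        apply Subtype.ext
        choose v hv using fun i => Submodule.Quotient.mk_surjective I (y i)
        have hy' : y = fun i => Submodule.Quotient.mk (v i) := funext fun i => (hv i).symm
        rw [LinearMap.mem_ker, hy', hf, Submodule.Quotient.mk_eq_zero] at hy
        obtain ⟨w, hw, hw'⟩ := hsW _ hy
        have h0 : f0 (s • v - w) = 0 := by rw [map_sub, map_smul, hw', sub_self]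
        funext i
        change s • y i = 0
        rw [← hv i, ← Submodule.Quotient.mk_smul, Submodule.Quotient.mk_eq_zero]
        have := add_mem (hker _ h0 i) (hw i)
        simpa using this
    exact fun r hr y => Module.mem_annihilator.mp (this hr) y
  apply of_pi_succ hC n
  refine ext hC f.rangeRestrict (LinearMap.surjective_rangeRestrict f) ?_ hr
  rwa [LinearMap.ker_rangeRestrict]

lemma main (hC : IsWideSubcategory C) (hcoh : IsLeftCoherentRing R) [Module.FinitePresentation R X]
    (hM : ModuleCat.of R X ∈ C) (n : ℕ) : ∀ (s : R) (x : Fin n → X),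
    (∀ m : X, s • m ∈ LinearMap.range (Fintype.linearCombination R x)) →
    ∀ J : Ideal R, J.FG → Module.annihilator R X ≤ J →
    ModuleCat.of R (R ⧸ (J ⊔ Ideal.span {s})) ∈ C → ModuleCat.of R (R ⧸ J) ∈ C := by
  classical
  induction n with
  | zero =>
    intro s x hs J hJ hA h
    have : s ∈ J := hA (Module.mem_annihilator.mpr fun m => by
      obtain ⟨w, hw⟩ := hs m
      rw [← hw]
      simp [Fintype.linearCombination_apply])
    rwa [sup_eq_left.mpr ((Ideal.span_singleton_le_iff_mem _).mpr this)] at h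
  | succ n ih =>
    intro s x hs J hJ hA h
    let f0 := Fintype.linearCombination R x
    have i1 : Module.FinitePresentation R (LinearMap.range f0) :=
      FGSubFP.of_fp hcoh _ (Module.Finite.iff_fg.mp inferInstance)
    have hkfg : (LinearMap.ker f0).FG := by
      rw [← LinearMap.ker_rangeRestrict]
      exact Module.FinitePresentation.fg_ker _ (LinearMap.surjective_rangeRestrict f0)
    obtain ⟨T0, hT0⟩ := hkfg
    let T : Finset R := (T0 ×ˢ Finset.univ).image (fun p : (Fin (n+1) → R) × Fin (n+1) => p.1 p.2)
    have hTfg : (Ideal.span (T : Set R)).FG := Submodule.fg_span T.finite_toSet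
    refine descend hC T (Module.annihilator R X) s hcoh ?_ J hJ hA h ?_
    · intro t ht J' hJ' hA' h'
      obtain ⟨⟨v, i⟩, hvi, rfl⟩ := Finset.mem_image.mp ht
      have hv : f0 v = 0 := by
        have : v ∈ LinearMap.ker f0 := by
          rw [← hT0]
          exact Submodule.subset_span (Finset.mem_product.mp hvi).1
        exact this
      refine ih (s * v i) (fun j => x (i.succAbove j)) ?_ J' hJ' hA' h'
      intro m
      obtain ⟨w, hw⟩ := hs m
      refine ⟨fun j => v i * w (i.succAbove j) - w i * v (i.succAbove j), ?_⟩
      rw [mul_comm, mul_smul, ← hw]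
      simp only [f0, Fintype.linearCombination_apply] at hv ⊢
      rw [Fin.sum_univ_succAbove _ i] at hv ⊢
      simp only [sub_smul, mul_smul, Finset.sum_sub_distrib, ← Finset.smul_sum]
      rw [eq_neg_of_add_eq_zero_right hv, smul_neg, sub_neg_eq_add, smul_add, add_comm,
        smul_comm (w i)]
    · refine free_step hC hcoh hM n s x (fun m _ => hs m) J _ (Submodule.FG.sup hJ hTfg)
        le_sup_left ?_ h
      intro v hv
      have hv' : v ∈ Submodule.span R (T0 : Set (Fin (n+1) → R)) := by
        rw [hT0]; exact hv
      clear hv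
      refine fun i => Submodule.mem_sup_right ?_
      induction hv' using Submodule.span_induction with
      | mem v hv =>
        exact Submodule.subset_span (Finset.mem_coe.mpr (Finset.mem_image.mpr
          ⟨(v, i), Finset.mem_product.mpr ⟨hv, Finset.mem_univ _⟩, rfl⟩))
      | zero => exact zero_mem _
      | add a b _ _ ha hb =>
        exact add_mem ha hb
      | smul c a _ ha => exact Ideal.mul_mem_left _ _ ha

lemma of_annihilator (hC : IsWideSubcategory C) (hcoh : IsLeftCoherentRing R) [Module.FinitePresentation R X]
    (hM : ModuleCat.of R X ∈ C) : ModuleCat.of R (R ⧸ Module.annihilator R X) ∈ C := by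
  obtain ⟨n, f, hf⟩ := Module.Finite.exists_fin' R X
  let x : Fin n → X := fun i => f (Pi.single i 1)
  have hx : ∀ v, Fintype.linearCombination R x v = f v := by
    intro v
    conv_rhs => rw [LinearMap.pi_apply_eq_sum_univ f v]
    rw [Fintype.linearCombination_apply]
    refine Finset.sum_congr rfl fun i _ => ?_
    simp only [x]
    congr 2
    funext j
    simp [Pi.single_apply, eq_comm]
  have hA : (Module.annihilator R X).FG := by
    let g : R →ₗ[R] (Fin n → X) := LinearMap.pi fun i => LinearMap.toSpanSingleton R X (x i)
    have i1 : Module.FinitePresentation R (LinearMap.range g) :=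
      FGSubFP.of_fp hcoh _ (Module.Finite.iff_fg.mp inferInstance)
    have : (LinearMap.ker g).FG := by
      rw [← LinearMap.ker_rangeRestrict]
      exact Module.FinitePresentation.fg_ker _ (LinearMap.surjective_rangeRestrict g)
    suffices hAg : Module.annihilator R X = LinearMap.ker g by rw [hAg]; exact this
    ext r
    rw [Module.mem_annihilator, LinearMap.mem_ker]
    constructor
    · intro h
      funext i
      exact h (x i)
    · intro h m
      obtain ⟨v, rfl⟩ := hf m
      rw [← hx, Fintype.linearCombination_apply, Finset.smul_sum]
      refine Finset.sum_eq_zero fun i _ => ?_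
      have : r • x i = 0 := congrFun h i
      rw [smul_comm, this, smul_zero]
  refine main hC hcoh hM n 1 x ?_ _ hA le_rfl ?_
  · intro m
    obtain ⟨v, rfl⟩ := hf m
    exact ⟨v, by rw [hx, one_smul]⟩
  · have : Subsingleton (R ⧸ (Module.annihilator R X ⊔ Ideal.span {(1 : R)})) := by
      rw [Ideal.span_singleton_one, sup_top_eq]
      infer_instance
    exact zero hC hM

end WideAux
end Helpers

/-- Corollary 3.7: if `R` is a regular commutative coherent ring,
`C` a wide subcategory of finitely presented `R`-modules and `M ∈ C`, then every
finitely presented submodule and every finitely presented quotient module of `M` lies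
in `C`.  In particular, if `R` is moreover Noetherian, every wide subcategory of
finitely generated `R`-modules is a Serre class (closed under arbitrary submodules). -/
theorem wide_closed_under_sub_and_quot (R : Type u) [CommRing R]
    (hcoh : IsLeftCoherentRing R)
    (hreg : ∀ M : ModuleCat.{u} R, Module.FinitePresentation R M →
      HasFiniteProjectiveDimension R M) :
    (∀ (C : Set (ModuleCat.{u} R)), IsWideSubcategory C → C ⊆ finPresModules R →
      ∀ M ∈ C, ∀ N : Submodule R M,
        (Module.FinitePresentation R N → ModuleCat.of R N ∈ C) ∧
        (Module.FinitePresentation R (M ⧸ N) → ModuleCat.of R (M ⧸ N) ∈ C)) ∧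
    (IsNoetherianRing R →
      ∀ (C : Set (ModuleCat.{u} R)), IsWideSubcategory C →
        (∀ M ∈ C, Module.Finite R M) →
        ∀ M ∈ C, ∀ N : Submodule R M, ModuleCat.of R N ∈ C) := by
  have key : (∀ (C : Set (ModuleCat.{u} R)), IsWideSubcategory C → C ⊆ finPresModules R →
      ∀ M ∈ C, ∀ N : Submodule R M,
        (Module.FinitePresentation R N → ModuleCat.of R N ∈ C) ∧
        (Module.FinitePresentation R (M ⧸ N) → ModuleCat.of R (M ⧸ N) ∈ C)) := by
    intro C hC hfp M hM N
    have i1 : Module.FinitePresentation R M := hfp hM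
    have h := WideAux.of_annihilator (X := M) hC hcoh hM
    constructor
    · intro i2
      refine WideAux.of_killed hC h fun r hr x => Subtype.ext ?_
      exact Module.mem_annihilator.mp hr x.1
    · intro i2
      refine WideAux.of_killed hC h fun r hr x => ?_
      obtain ⟨y, rfl⟩ := Submodule.Quotient.mk_surjective _ x
      rw [← Submodule.Quotient.mk_smul, Module.mem_annihilator.mp hr y]
      rfl
  refine ⟨key, fun hN C hC hfin M hM N => ?_⟩
  have hfp : C ⊆ finPresModules R := fun M hM => by
    have := hfin M hM
    exact Module.finitePresentation_of_finite R M
  have := hfin M hM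
  exact (key C hC hfp M hM N).1 (Module.finitePresentation_of_finite R N)
end

section
/- Let R be a left coherent ring and let a be a two-sided ideal of R that is finitely generated as a left ideal. Let u send a wide subcategory C of finitely presented R/a-modules to the wide subcategory of R-modules generated by the modules of C regarded as R-modules via restriction along R → R/a. Then u is an embedding of the lattice of wide subcategories of finitely presented R/a-modules into the lattice of wide subcategories of C_0(R): for every wide subcategory C of finitely presented R/a-modules, an R-module M in u(C) on which a acts trivially lies in C (so vu(C) = C, where v(D) = {M ∈ D : aM = 0}). -/
open CategoryTheory CategoryTheory.Limits CategoryTheory.Pretriangulated ZeroObject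

universe w u

namespace VuAux

/-- The extension closure of a class of modules. -/
inductive Filt {R : Type u} [Ring R] (B : Set (ModuleCat.{u} R)) : ModuleCat.{u} R → Prop
  | base (M : ModuleCat.{u} R) (h : M ∈ B) : Filt B M
  | ext (X Y Z : ModuleCat.{u} R) (i : X →ₗ[R] Y) (p : Y →ₗ[R] Z)
      (hi : Function.Injective i) (hip : Function.Exact i p) (hp : Function.Surjective p)
      (hX : Filt B X) (hZ : Filt B Z) : Filt B Y

/-- A class closed under isomorphisms, kernels and cokernels. -/
structure KC {R : Type u} [Ring R] (B : Set (ModuleCat.{u} R)) : Prop where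
  iso : ∀ {X Y : ModuleCat.{u} R}, (X ≃ₗ[R] Y) → X ∈ B → Y ∈ B
  ker : ∀ {X Y : ModuleCat.{u} R} (f : X →ₗ[R] Y), X ∈ B → Y ∈ B →
    ModuleCat.of R (LinearMap.ker f) ∈ B
  coker : ∀ {X Y : ModuleCat.{u} R} (f : X →ₗ[R] Y), X ∈ B → Y ∈ B →
    ModuleCat.of R (Y ⧸ LinearMap.range f) ∈ B

variable {R : Type u} [Ring R] {B : Set (ModuleCat.{u} R)}

theorem Filt.iso (hB : KC B) {X Y : ModuleCat.{u} R} (e : X ≃ₗ[R] Y) (h : Filt B X) :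
    Filt B Y := by
  cases h with
  | base _ h => exact .base _ (hB.iso e h)
  | ext A _ C i p hi hip hp hA hC =>
    refine .ext A Y C (e.toLinearMap ∘ₗ i) (p ∘ₗ e.symm.toLinearMap) ?_ ?_ ?_ hA hC
    · exact e.injective.comp hi
    · intro y
      have := hip (e.symm y)
      simp only [LinearMap.comp_apply, LinearEquiv.coe_coe, this, Set.mem_range]
      simp [LinearEquiv.eq_symm_apply]
    · exact hp.comp e.symm.surjective

theorem step1 (hB : KC B) {E : ModuleCat.{u} R} (hE : Filt B E) :
    ∀ (Y : ModuleCat.{u} R), Y ∈ B → ∀ f : E →ₗ[R] Y,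
      Filt B (ModuleCat.of R (LinearMap.ker f)) ∧
        ModuleCat.of R (Y ⧸ LinearMap.range f) ∈ B := by
  induction hE with
  | base M hM => exact fun Y hY f => ⟨.base _ (hB.ker f hM hY), hB.coker f hM hY⟩
  | ext A E C i p hi hip hp hA hC ihA ihC =>
    intro Y hY f
    obtain ⟨hk, hQ⟩ := ihA Y hY (f ∘ₗ i)
    let Q := Y ⧸ LinearMap.range (f ∘ₗ i)
    obtain ⟨fb, hfb⟩ : ∃ fb : C →ₗ[R] Q, ∀ e, fb (p e) = Submodule.Quotient.mk (f e) := by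
      refine ⟨(LinearMap.ker p).liftQ ((LinearMap.range (f ∘ₗ i)).mkQ ∘ₗ f) ?_ ∘ₗ
        (p.quotKerEquivOfSurjective hp).symm.toLinearMap, ?_⟩
      · intro e he
        obtain ⟨a, rfl⟩ := (hip e).1 he
        exact (Submodule.Quotient.mk_eq_zero _).2 ⟨a, rfl⟩
      · intro e
        have : (p.quotKerEquivOfSurjective hp).symm (p e) = Submodule.Quotient.mk e := by
          rw [LinearEquiv.symm_apply_eq]; rfl
        simp only [LinearMap.comp_apply, LinearEquiv.coe_coe, this]
        rfl
    obtain ⟨hk', hQ'⟩ := ihC (ModuleCat.of R Q) hQ fb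
    constructor
    · refine .ext _ _ _
        (i.restrict (p := LinearMap.ker (f ∘ₗ i)) (q := LinearMap.ker f) fun x hx => hx)
        (p.restrict (p := LinearMap.ker f) (q := LinearMap.ker fb) ?_) ?_ ?_ ?_ hk hk'
      · intro x hx
        rw [LinearMap.mem_ker] at hx ⊢
        rw [hfb, hx]; rfl
      · intro x y h
        exact Subtype.ext (hi (congrArg Subtype.val h))
      · rintro ⟨e, he⟩
        constructor
        · intro h
          obtain ⟨a, rfl⟩ := (hip e).1 (congrArg Subtype.val h)
          exact ⟨⟨a, he⟩, rfl⟩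
        · rintro ⟨⟨a, ha⟩, h⟩
          have h' : i a = e := congrArg Subtype.val h
          exact Subtype.ext ((hip e).2 ⟨a, h'⟩)
      · rintro ⟨c, hc⟩
        obtain ⟨e, rfl⟩ := hp c
        rw [LinearMap.mem_ker, hfb, Submodule.Quotient.mk_eq_zero] at hc
        obtain ⟨a, ha⟩ := hc
        refine ⟨⟨e - i a, ?_⟩, Subtype.ext ?_⟩
        · rw [LinearMap.mem_ker, map_sub, ← ha]; simp
        · change p (e - i a) = p e
          rw [map_sub, (hip (i a)).2 ⟨a, rfl⟩, sub_zero]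
    · let q : Y →ₗ[R] (Q ⧸ LinearMap.range fb) :=
        (LinearMap.range fb).mkQ ∘ₗ (LinearMap.range (f ∘ₗ i)).mkQ
      have hq : Function.Surjective q :=
        (Submodule.mkQ_surjective _).comp (Submodule.mkQ_surjective _)
      have hker : LinearMap.ker q = LinearMap.range f := by
        ext y
        simp only [q, LinearMap.mem_ker, LinearMap.comp_apply, Submodule.mkQ_apply,
          Submodule.Quotient.mk_eq_zero, LinearMap.mem_range]
        constructor
        · rintro ⟨c, hc⟩
          obtain ⟨e, rfl⟩ := hp c
          rw [hfb] at hc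
          obtain ⟨a, ha⟩ := (Submodule.Quotient.eq _).1 hc
          refine ⟨e - i a, ?_⟩
          rw [map_sub]
          change f (i a) = _ at ha
          rw [ha]; abel
        · rintro ⟨e, rfl⟩
          exact ⟨p e, hfb e⟩
      exact hB.iso (X := ModuleCat.of R (Q ⧸ LinearMap.range fb))
        (Y := ModuleCat.of R (Y ⧸ LinearMap.range f))
        ((q.quotKerEquivOfSurjective hq).symm.trans (Submodule.quotEquivOfEq _ _ hker)) hQ'

theorem step2 (hB : KC B) {E' : ModuleCat.{u} R} (hE' : Filt B E') :
    ∀ (E : ModuleCat.{u} R), Filt B E → ∀ f : E →ₗ[R] E',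
      Filt B (ModuleCat.of R (LinearMap.ker f)) ∧
        Filt B (ModuleCat.of R (E' ⧸ LinearMap.range f)) := by
  induction hE' with
  | base M hM =>
    intro E hE f
    obtain ⟨h1, h2⟩ := step1 hB hE M hM f
    exact ⟨h1, .base _ h2⟩
  | ext A E' C i p hi hip hp hA hC ihA ihC =>
    intro E hE f
    obtain ⟨hK, hQ⟩ := ihC E hE (p ∘ₗ f)
    obtain ⟨h, hh⟩ : ∃ h : LinearMap.ker (p ∘ₗ f) →ₗ[R] A, ∀ x, i (h x) = f x := by
      refine ⟨(LinearEquiv.ofInjective i hi).symm.toLinearMap ∘ₗ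
        (f ∘ₗ (LinearMap.ker (p ∘ₗ f)).subtype).codRestrict (LinearMap.range i) ?_, ?_⟩
      · rintro ⟨x, hx⟩
        exact (hip (f x)).1 hx
      · intro x
        have := (LinearEquiv.ofInjective i hi).apply_symm_apply
          ((f ∘ₗ (LinearMap.ker (p ∘ₗ f)).subtype).codRestrict (LinearMap.range i)
            (fun x => (hip (f x)).1 x.2) x)
        exact congrArg Subtype.val this
    obtain ⟨hk, hq⟩ := ihA (ModuleCat.of R (LinearMap.ker (p ∘ₗ f))) hK h
    have hpi : ∀ a, p (i a) = 0 := fun a => (hip (i a)).2 ⟨a, rfl⟩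
    constructor
    · let φ : LinearMap.ker h →ₗ[R] LinearMap.ker f :=
        (LinearMap.ker (p ∘ₗ f)).subtype.restrict (p := LinearMap.ker h) (q := LinearMap.ker f)
          (by
            intro x hx
            rw [LinearMap.mem_ker] at hx ⊢
            change f x = 0
            rw [← hh, hx, map_zero])
      have hφ : Function.Bijective φ := by
        constructor
        · intro x y hxy
          exact Subtype.ext (Subtype.ext (congrArg (fun z : LinearMap.ker f => z.1) hxy))
        · rintro ⟨x, hx⟩
          rw [LinearMap.mem_ker] at hx
          refine ⟨⟨⟨x, ?_⟩, ?_⟩, rfl⟩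
          · simp [hx]
          · rw [LinearMap.mem_ker]
            apply hi
            exact (hh _).trans (hx.trans (map_zero i).symm)
      exact Filt.iso hB (X := ModuleCat.of R (LinearMap.ker h))
        (Y := ModuleCat.of R (LinearMap.ker f)) (LinearEquiv.ofBijective φ hφ) hk
    · refine .ext _ _ _
        (Submodule.mapQ (LinearMap.range h) (LinearMap.range f) i ?_)
        (Submodule.mapQ (LinearMap.range f) (LinearMap.range (p ∘ₗ f)) p ?_) ?_ ?_ ?_ hq hQ
      · rintro _ ⟨x, rfl⟩
        exact ⟨x, (hh x).symm⟩
      · rintro _ ⟨x, rfl⟩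
        exact ⟨x, rfl⟩
      · rw [injective_iff_map_eq_zero]
        intro x
        obtain ⟨a, rfl⟩ := Submodule.Quotient.mk_surjective _ x
        rw [Submodule.mapQ_apply, Submodule.Quotient.mk_eq_zero, Submodule.Quotient.mk_eq_zero]
        rintro ⟨e, he⟩
        refine ⟨⟨e, ?_⟩, hi ?_⟩
        · rw [LinearMap.mem_ker, LinearMap.comp_apply, he, hpi]
        · rw [hh, he]
      · intro x
        obtain ⟨y, rfl⟩ := Submodule.Quotient.mk_surjective _ x
        rw [Submodule.mapQ_apply, Submodule.Quotient.mk_eq_zero]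
        constructor
        · rintro ⟨e, he⟩
          have h0 : p (y - f e) = 0 := by rw [map_sub, ← he]; simp
          obtain ⟨a, ha⟩ := (hip _).1 h0
          refine ⟨Submodule.Quotient.mk a, ?_⟩
          rw [Submodule.mapQ_apply, Submodule.Quotient.eq, ha]
          exact ⟨-e, by rw [map_neg]; abel⟩
        · rintro ⟨z, hz⟩
          obtain ⟨a, rfl⟩ := Submodule.Quotient.mk_surjective _ z
          rw [Submodule.mapQ_apply, Submodule.Quotient.eq] at hz
          obtain ⟨e, he⟩ := hz
          refine ⟨-e, ?_⟩
          rw [LinearMap.comp_apply, map_neg, he]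
          simp [hpi]
      · intro x
        obtain ⟨c, rfl⟩ := Submodule.Quotient.mk_surjective _ x
        obtain ⟨y, rfl⟩ := hp c
        exact ⟨Submodule.Quotient.mk y, rfl⟩

theorem filt_wide (hB : KC B) : IsWideSubcategory {M | Filt B M} where
  mem_of_iso e h := Filt.iso hB e.toLinearEquiv h
  kernel_mem f hX hY :=
    Filt.iso hB (ModuleCat.kernelIsoKer f).symm.toLinearEquiv (step2 hB hY _ hX f.hom).1
  cokernel_mem f hX hY :=
    Filt.iso hB (ModuleCat.cokernelIsoRangeQuotient f).symm.toLinearEquiv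
      (step2 hB hY _ hX f.hom).2
  extension_mem T hT h1 h3 :=
    .ext _ _ _ T.f.hom T.g.hom hT.moduleCat_injective_f
      ((ShortComplex.ShortExact.moduleCat_exact_iff_function_exact T).1 hT.exact)
      hT.moduleCat_surjective_g h1 h3

variable {S : Type u} [Ring S] (π : R →+* S)

theorem res_full (hπ : Function.Surjective π) : (ModuleCat.restrictScalars.{u} π).Full where
  map_surjective {X Y} f := by
    refine ⟨ModuleCat.ofHom (X := X) (Y := Y)
      { toFun := fun x => f.hom x
        map_add' := fun x y => f.hom.map_add x y
        map_smul' := ?_ }, ?_⟩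
    · intro s x
      obtain ⟨r, rfl⟩ := hπ s
      exact f.hom.map_smul r x
    · rfl

theorem res_kc (hπ : Function.Surjective π) {C : Set (ModuleCat.{u} S)}
    (hC : IsWideSubcategory C) :
    KC {M : ModuleCat.{u} R | ∃ N ∈ C, Nonempty (M ≅ (ModuleCat.restrictScalars π).obj N)} := by
  have := res_full π hπ
  refine ⟨?_, ?_, ?_⟩
  · rintro X Y e ⟨N, hN, ⟨e'⟩⟩
    exact ⟨N, hN, ⟨e.symm.toModuleIso ≪≫ e'⟩⟩
  · rintro X Y f ⟨N, hN, ⟨e⟩⟩ ⟨N', hN', ⟨e'⟩⟩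
    let g := (ModuleCat.restrictScalars π).preimage (e.inv ≫ ModuleCat.ofHom f ≫ e'.hom)
    refine ⟨kernel g, hC.kernel_mem g hN hN', ⟨(ModuleCat.kernelIsoKer (ModuleCat.ofHom f)).symm ≪≫
      kernel.mapIso _ _ e e' ?_ ≪≫ (PreservesKernel.iso (ModuleCat.restrictScalars π) g).symm⟩⟩
    simp [g]
  · rintro X Y f ⟨N, hN, ⟨e⟩⟩ ⟨N', hN', ⟨e'⟩⟩
    let g := (ModuleCat.restrictScalars π).preimage (e.inv ≫ ModuleCat.ofHom f ≫ e'.hom)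
    refine ⟨cokernel g, hC.cokernel_mem g hN hN',
      ⟨(ModuleCat.cokernelIsoRangeQuotient (ModuleCat.ofHom f)).symm ≪≫
      cokernel.mapIso _ _ e e' ?_ ≪≫ (PreservesCokernel.iso (ModuleCat.restrictScalars π) g).symm⟩⟩
    simp [g]

theorem mem_of_filt (hπ : Function.Surjective π) {C : Set (ModuleCat.{u} S)}
    (hC : IsWideSubcategory C) {X : ModuleCat.{u} R}
    (hX : Filt {M : ModuleCat.{u} R |
      ∃ N ∈ C, Nonempty (M ≅ (ModuleCat.restrictScalars π).obj N)} X) :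
    ∀ N : ModuleCat.{u} S, (X ≃ₗ[R] (ModuleCat.restrictScalars π).obj N) → N ∈ C := by
  have := res_full π hπ
  induction hX with
  | base M hM =>
    obtain ⟨N', hN', ⟨e'⟩⟩ := hM
    intro N e
    exact hC.mem_of_iso ((ModuleCat.restrictScalars π).preimageIso
      (e'.symm ≪≫ e.toModuleIso)) hN'
  | ext A E D i p hi hip hp hA hD ihA ihD =>
    intro N e
    let P : Submodule S N :=
      { carrier := {n | ∃ a, e (i a) = n}
        zero_mem' := ⟨0, by simp; rfl⟩
        add_mem' := by
          rintro _ _ ⟨a, rfl⟩ ⟨b, rfl⟩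
          exact ⟨a + b, by rw [map_add, map_add]; rfl⟩
        smul_mem' := by
          rintro s _ ⟨a, rfl⟩
          obtain ⟨r, rfl⟩ := hπ s
          exact ⟨r • a, by rw [map_smul, map_smul]; rfl⟩ }
    have hP : ModuleCat.of S P ∈ C := by
      apply ihA
      let φ : A →ₗ[R] (ModuleCat.restrictScalars π).obj (ModuleCat.of S P) :=
        { toFun := fun a => (⟨e (i a), a, rfl⟩ : P)
          map_add' := fun a b => Subtype.ext (by
            change e (i (a + b)) = e (i a) + e (i b)
            rw [map_add, map_add])
          map_smul' := fun r a => Subtype.ext (by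
            change e (i (r • a)) = r • e (i a)
            rw [map_smul, map_smul]) }
      refine LinearEquiv.ofBijective φ ⟨?_, ?_⟩
      · intro a b hab
        exact hi (e.injective (congrArg (fun x : P => x.1) hab))
      · rintro ⟨n, a, rfl⟩
        exact ⟨a, rfl⟩
    have hQ : ModuleCat.of S (N ⧸ P) ∈ C := by
      apply ihD
      let ψ : E →ₗ[R] (ModuleCat.restrictScalars π).obj (ModuleCat.of S (N ⧸ P)) :=
        ((ModuleCat.restrictScalars π).map (ModuleCat.ofHom P.mkQ)).hom ∘ₗ e.toLinearMap
      have hψ : Function.Surjective ψ :=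
        (Submodule.mkQ_surjective P).comp e.surjective
      have hk : LinearMap.ker p = LinearMap.ker ψ := by
        ext x
        have h1 : ψ x = 0 ↔ (e x : N) ∈ P := Submodule.Quotient.mk_eq_zero P
        rw [LinearMap.mem_ker, LinearMap.mem_ker, h1, hip x]
        constructor
        · rintro ⟨a, rfl⟩
          exact ⟨a, rfl⟩
        · rintro ⟨a, ha⟩
          exact ⟨a, e.injective ha⟩
      exact (p.quotKerEquivOfSurjective hp).symm.trans
        ((Submodule.quotEquivOfEq _ _ hk).trans (ψ.quotKerEquivOfSurjective hψ))
    let T : ShortComplex (ModuleCat.{u} S) :=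
      ShortComplex.mk (ModuleCat.ofHom P.subtype) (ModuleCat.ofHom P.mkQ) (by
        ext x
        exact (Submodule.Quotient.mk_eq_zero P).2 x.2)
    have hT : T.ShortExact := by
      apply ModuleCat.shortComplex_shortExact
      · exact LinearMap.exact_subtype_mkQ P
      · exact Subtype.val_injective
      · exact Submodule.mkQ_surjective P
    exact hC.extension_mem T hT hP hQ

end VuAux

/-- Theorem 4.5: let `R` be a left coherent ring and `a` a two-sided
ideal of `R`, finitely generated as a left ideal; present the quotient ring `R/a` as a
surjective ring homomorphism `π : R →+* S` with finitely generated kernel.  Let `u` send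
a wide subcategory `C` of finitely presented `S`-modules to the wide subcategory of
`R`-modules generated by the modules of `C` restricted along `π`.  Then `u` is an
embedding: `v(u(C)) = C`, i.e. the `S`-modules whose restriction to `R` lies in `u(C)`
are exactly the members of `C`. -/
theorem vu_eq_self (R S : Type u) [Ring R] [Ring S] (π : R →+* S)
    (hπ : Function.Surjective π) (hcoh : IsLeftCoherentRing R)
    (hker : (RingHom.ker π).FG)
    (C : Set (ModuleCat.{u} S)) (hC : IsWideSubcategory C)
    (hCfp : C ⊆ finPresModules S) :
    {N : ModuleCat.{u} S |
      (ModuleCat.restrictScalars π).obj N ∈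
        wideClosure ((ModuleCat.restrictScalars π).obj '' C)} = C := by
  apply Set.Subset.antisymm
  · intro N hN
    have hw := VuAux.filt_wide (VuAux.res_kc π hπ hC)
    have h := hN _ ⟨hw, by
      rintro _ ⟨M, hM, rfl⟩
      exact .base _ ⟨M, hM, ⟨Iso.refl _⟩⟩⟩
    exact VuAux.mem_of_filt π hπ hC h N (LinearEquiv.refl _ _)
  · rintro N hN D ⟨_, hD⟩
    exact hD ⟨N, hN, rfl⟩
end

section
/- Let R be any ring and let C be a wide subcategory of left R-modules that is closed under arbitrary direct sums. Then gf(C) = C, where f(C) is the localizing subcategory of D(R) consisting of all objects X (not necessarily small) with H_n X ∈ C for all n ∈ ℤ, and g(D) is the smallest wide subcategory closed under arbitrary direct sums containing all homology modules H_n X for X ∈ D. -/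
open CategoryTheory CategoryTheory.Limits CategoryTheory.Pretriangulated ZeroObject

universe w u u₁ v₁

/-- A collection of objects is closed under arbitrary direct sums (coproducts) if the
vertex of any coproduct cocone on a family of its members again belongs to it. -/
def ClosedUnderDirectSums {T : Type u₁} [Category.{v₁} T] (D : Set T) : Prop :=
  ∀ {ι : Type u} (X : ι → T) (c : Cofan X), IsColimit c → (∀ i, X i ∈ D) → c.pt ∈ D

/-- The smallest wide subcategory closed under arbitrary direct sums containing a given
set of objects. -/
def wideCoprodClosure {R : Type u} [Ring R] (S : Set (ModuleCat.{u} R)) :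
    Set (ModuleCat.{u} R) :=
  ⋂₀ {C : Set (ModuleCat.{u} R) |
    IsWideSubcategory C ∧ ClosedUnderDirectSums.{u} C ∧ S ⊆ C}

/-- The map `f` on wide subcategories closed under direct sums: it sends `C` to the
collection of all objects `X` of the derived category (not necessarily small) with
`Hₙ X ∈ C` for all `n`. -/
def fBig {R : Type u} [Ring R] [HasDerivedCategory.{w} (ModuleCat.{u} R)]
    (C : Set (ModuleCat.{u} R)) : Set (DerivedCategory (ModuleCat.{u} R)) :=
  {X | ∀ n : ℤ, (DerivedCategory.homologyFunctor (ModuleCat.{u} R) n).obj X ∈ C}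

/-- The map `g` on localizing subcategories: it sends `D` to the smallest wide
subcategory closed under arbitrary direct sums containing all the homology modules
`Hₙ X` for `X ∈ D`. -/
def gBig {R : Type u} [Ring R] [HasDerivedCategory.{w} (ModuleCat.{u} R)]
    (D : Set (DerivedCategory (ModuleCat.{u} R))) : Set (ModuleCat.{u} R) :=
  wideCoprodClosure {M | ∃ X ∈ D, ∃ n : ℤ,
    Nonempty ((DerivedCategory.homologyFunctor (ModuleCat.{u} R) n).obj X ≅ M)}

section CoprodComplex

variable {R : Type u} [Ring R] {ι : Type u}

/-- A family of complexes as a complex in the functor category. -/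
noncomputable def famComplex (K : ι → CochainComplex (ModuleCat.{u} R) ℤ) :
    CochainComplex (Discrete ι ⥤ ModuleCat.{u} R) ℤ where
  X n := Discrete.functor (fun i => (K i).X n)
  d a b := Discrete.natTrans (fun i => (K i.as).d a b)
  shape a b h := by
    ext i : 2
    exact (K i.as).shape a b h
  d_comp_d' a b c _ _ := by
    ext i : 2
    exact (K i.as).d_comp_d a b c

/-- A family of morphisms of complexes. -/
noncomputable def famMap {K L : ι → CochainComplex (ModuleCat.{u} R) ℤ} (s : ∀ i, K i ⟶ L i) :
    famComplex K ⟶ famComplex L where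
  f n := Discrete.natTrans (fun i => (s i.as).f n)
  comm' a b _ := by
    ext i : 2
    exact (s i.as).comm a b

instance evalExact (i : Discrete ι) :
    ((evaluation (Discrete ι) (ModuleCat.{u} R)).obj i).PreservesHomology :=
  inferInstance

instance colimExact :
    (colim : (Discrete ι ⥤ ModuleCat.{u} R) ⥤ ModuleCat.{u} R).PreservesHomology := by
  have : HasExactColimitsOfShape (Discrete ι) (ModuleCat.{u} R) := inferInstance
  infer_instance

instance colimAdd :
    (colim : (Discrete ι ⥤ ModuleCat.{u} R) ⥤ ModuleCat.{u} R).Additive := by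
  infer_instance

/-- homology of the family complex, evaluated. -/
noncomputable def famHomologyIso (K : ι → CochainComplex (ModuleCat.{u} R) ℤ) (n : ℤ)
    (i : Discrete ι) :
    ((famComplex K).homology n).obj i ≅ (K i.as).homology n :=
  (((famComplex K).sc n).mapHomologyIso ((evaluation (Discrete ι) (ModuleCat.{u} R)).obj i)).symm

/-- The coproduct complex. -/
noncomputable def sumComplex (K : ι → CochainComplex (ModuleCat.{u} R) ℤ) :
    CochainComplex (ModuleCat.{u} R) ℤ :=
  (colim.mapHomologicalComplex _).obj (famComplex K)

/-- The map on coproducts. -/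
noncomputable def sumMap {K L : ι → CochainComplex (ModuleCat.{u} R) ℤ} (s : ∀ i, K i ⟶ L i) :
    sumComplex K ⟶ sumComplex L :=
  (colim.mapHomologicalComplex _).map (famMap s)

/-- inclusion -/
noncomputable def sumIn (K : ι → CochainComplex (ModuleCat.{u} R) ℤ) (i : ι) :
    K i ⟶ sumComplex K where
  f n := colimit.ι ((famComplex K).X n) ⟨i⟩
  comm' a b _ := by
    exact ι_colimMap ((famComplex K).d a b) ⟨i⟩

/-- descent -/
noncomputable def sumDesc (K : ι → CochainComplex (ModuleCat.{u} R) ℤ)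
    {Y : CochainComplex (ModuleCat.{u} R) ℤ} (g : ∀ i, K i ⟶ Y) :
    sumComplex K ⟶ Y where
  f n := colimit.desc ((famComplex K).X n) (Cofan.mk (Y.X n) (fun i => (g i).f n))
  comm' a b _ := by
    apply colimit.hom_ext
    intro i
    have h1 := colimit.ι_desc (F := (famComplex K).X a)
      (Cofan.mk (Y.X a) (fun i => (g i).f a)) i
    have h2 := colimit.ι_desc (F := (famComplex K).X b)
      (Cofan.mk (Y.X b) (fun i => (g i).f b)) i
    have h3 := ι_colimMap ((famComplex K).d a b) i
    refine (Category.assoc _ _ _).symm.trans ((congrArg (· ≫ Y.d a b) h1).trans ?_)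
    refine ((g i.as).comm a b).trans ?_
    refine Eq.trans ?_ (Category.assoc _ _ _)
    refine Eq.trans ?_ (congrArg (· ≫ _) h3.symm)
    refine Eq.trans ?_ (Category.assoc _ _ _).symm
    exact (congrArg ((K i.as).d a b ≫ ·) h2).symm

lemma sumIn_desc (K : ι → CochainComplex (ModuleCat.{u} R) ℤ)
    {Y : CochainComplex (ModuleCat.{u} R) ℤ} (g : ∀ i, K i ⟶ Y) (i : ι) :
    sumIn K i ≫ sumDesc K g = g i := by
  apply HomologicalComplex.hom_ext
  intro n
  exact colimit.ι_desc (F := (famComplex K).X n) (Cofan.mk (Y.X n) (fun i => (g i).f n)) ⟨i⟩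

lemma sumIn_map {K L : ι → CochainComplex (ModuleCat.{u} R) ℤ} (s : ∀ i, K i ⟶ L i) (i : ι) :
    sumIn K i ≫ sumMap s = s i ≫ sumIn L i := by
  apply HomologicalComplex.hom_ext
  intro n
  exact ι_colimMap ((famMap s).f n) ⟨i⟩

lemma quasiIso_sumMap {K L : ι → CochainComplex (ModuleCat.{u} R) ℤ} (s : ∀ i, K i ⟶ L i)
    (hs : ∀ i, QuasiIso (s i)) : QuasiIso (sumMap s) := by
  have : QuasiIso (famMap s) := by
    refine ⟨fun n => ?_⟩
    rw [quasiIsoAt_iff_isIso_homologyMap, NatTrans.isIso_iff_isIso_app]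
    intro i
    have hn := ShortComplex.mapHomologyIso_hom_naturality
      ((HomologicalComplex.shortComplexFunctor _ _ n).map (famMap s))
      ((evaluation (Discrete ι) (ModuleCat.{u} R)).obj i)
    have hq : IsIso (HomologicalComplex.homologyMap (s i.as) n) := inferInstance
    have : HomologicalComplex.homologyMap (s i.as) n ≫ (famHomologyIso L n i).inv =
      (famHomologyIso K n i).inv ≫ (HomologicalComplex.homologyMap (famMap s) n).app i := hn
    rw [show (HomologicalComplex.homologyMap (famMap s) n).app i = _ from
      ((Iso.inv_comp_eq _).1 this.symm)]
    infer_instance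
  exact @HomologicalComplex.quasiIso_map_of_preservesHomology _ _ _ _ _ _ _ _ _ _ (famMap s) colim _ _ _ _ _ _ _

lemma sum_homology_mem (K : ι → CochainComplex (ModuleCat.{u} R) ℤ) (n : ℤ)
    (C : Set (ModuleCat.{u} R)) (hC : IsWideSubcategory C)
    (hC' : ClosedUnderDirectSums.{u} C) (h : ∀ i, (K i).homology n ∈ C) :
    (sumComplex K).homology n ∈ C := by
  let e : (sumComplex K).homology n ≅ colim.obj ((famComplex K).homology n) :=
    ((famComplex K).sc n).mapHomologyIso colim
  refine hC.mem_of_iso e.symm ?_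
  let F := (famComplex K).homology n
  let e2 : Discrete.functor (fun i => F.obj ⟨i⟩) ≅ F := Discrete.natIso (fun i => Iso.refl _)
  refine hC.mem_of_iso (HasColimit.isoOfNatIso e2) ?_
  exact hC' _ _ (colimit.isColimit (Discrete.functor (fun i => F.obj ⟨i⟩)))
    (fun i => hC.mem_of_iso (famHomologyIso K n ⟨i⟩).symm (h i))

end CoprodComplex

section Main

variable {R : Type u} [Ring R] [HasDerivedCategory.{w} (ModuleCat.{u} R)]

lemma zero_mem_of_closed {C : Set (ModuleCat.{u} R)} (hC : IsWideSubcategory C)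
    (hC' : ClosedUnderDirectSums.{u} C) {Z : ModuleCat.{u} R} (hZ : IsZero Z) : Z ∈ C := by
  have h := hC' (ι := PEmpty.{u+1}) (fun i => i.elim) _
    (coproductIsCoproduct (fun i : PEmpty.{u+1} => (i.elim : ModuleCat.{u} R))) (fun i => i.elim)
  have : kernel (𝟙 (∐ (fun i : PEmpty.{u+1} => (i.elim : ModuleCat.{u} R)))) ∈ C :=
    hC.kernel_mem _ h h
  exact hC.mem_of_iso (IsZero.iso (isZero_kernel_of_mono _) hZ) this

lemma retract_mem_wide {C : Set (ModuleCat.{u} R)} (hC : IsWideSubcategory C)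
    {X Y : ModuleCat.{u} R} (i : X ⟶ Y) (r : Y ⟶ X) (h : i ≫ r = 𝟙 X) (hY : Y ∈ C) : X ∈ C := by
  refine hC.mem_of_iso ?_ (hC.kernel_mem (𝟙 Y - r ≫ i) hY hY)
  refine ⟨kernel.ι _ ≫ r, kernel.lift _ i ?_, ?_, ?_⟩
  · rw [Preadditive.comp_sub, Category.comp_id, reassoc_of% h, sub_self]
  · rw [← cancel_mono (kernel.ι _)]
    have := kernel.condition (𝟙 Y - r ≫ i)
    rw [Preadditive.comp_sub, Category.comp_id, sub_eq_zero] at this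
    simp [← this]
  · simp [h]

lemma five_mem_wide {C : Set (ModuleCat.{u} R)} (hC : IsWideSubcategory C)
    {A B M D E : ModuleCat.{u} R} (a : A ⟶ B) (b : B ⟶ M) (c : M ⟶ D) (d : D ⟶ E)
    (hab : a ≫ b = 0) (hbc : b ≫ c = 0) (hcd : c ≫ d = 0)
    (e1 : (ShortComplex.mk a b hab).Exact) (e2 : (ShortComplex.mk b c hbc).Exact)
    (e3 : (ShortComplex.mk c d hcd).Exact)
    (hA : A ∈ C) (hB : B ∈ C) (hD : D ∈ C) (hE : E ∈ C) : M ∈ C := by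
  let S : ShortComplex (ModuleCat.{u} R) :=
    ShortComplex.mk (cokernel.desc a b hab) (kernel.lift d c hcd) (by
      rw [← cancel_epi (cokernel.π a), ← cancel_mono (kernel.ι d)]
      simp [hbc])
  have hm : Mono S.f := e1.mono_cokernelDesc
  have he : Epi S.g := e3.epi_kernelLift
  have hS : S.Exact := by
    have hz : b ≫ kernel.lift d c hcd = 0 := by
      rw [← cancel_mono (kernel.ι d)]; simp [hbc]
    let φ₁ : ShortComplex.mk b (kernel.lift d c hcd) hz ⟶ ShortComplex.mk b c hbc :=
      { τ₁ := 𝟙 _, τ₂ := 𝟙 _, τ₃ := kernel.ι d }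
    let φ₂ : ShortComplex.mk b (kernel.lift d c hcd) hz ⟶ S :=
      { τ₁ := cokernel.π a, τ₂ := 𝟙 _, τ₃ := 𝟙 _,
        comm₁₂ := by simp [S], comm₂₃ := by simp [S] }
    have i1 : Epi φ₁.τ₁ := inferInstanceAs (Epi (𝟙 _))
    have i2 : IsIso φ₁.τ₂ := inferInstanceAs (IsIso (𝟙 _))
    have i3 : Mono φ₁.τ₃ := inferInstanceAs (Mono (kernel.ι d))
    have j1 : Epi φ₂.τ₁ := inferInstanceAs (Epi (cokernel.π a))
    have j2 : IsIso φ₂.τ₂ := inferInstanceAs (IsIso (𝟙 _))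
    have j3 : Mono φ₂.τ₃ := inferInstanceAs (Mono (𝟙 _))
    exact (ShortComplex.exact_iff_of_epi_of_isIso_of_mono φ₂).1
      ((ShortComplex.exact_iff_of_epi_of_isIso_of_mono φ₁).2 e2)
  exact hC.extension_mem S ⟨hS⟩ (hC.cokernel_mem a hA hB) (hC.kernel_mem d hD hE)

lemma fBig_retract {C : Set (ModuleCat.{u} R)} (hC : IsWideSubcategory C)
    (X Y : DerivedCategory (ModuleCat.{u} R)) (i : X ⟶ Y) (r : Y ⟶ X) (h : i ≫ r = 𝟙 X)
    (hY : Y ∈ fBig C) : X ∈ fBig C := fun n =>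
  retract_mem_wide hC ((DerivedCategory.homologyFunctor _ n).map i)
    ((DerivedCategory.homologyFunctor _ n).map r)
    (by rw [← Functor.map_comp, h, CategoryTheory.Functor.map_id]) (hY n)

lemma fBig_iso {C : Set (ModuleCat.{u} R)} (hC : IsWideSubcategory C)
    {X Y : DerivedCategory (ModuleCat.{u} R)} (e : X ≅ Y)
    (hX : X ∈ fBig C) : Y ∈ fBig C := fun n =>
  hC.mem_of_iso ((DerivedCategory.homologyFunctor _ n).mapIso e) (hX n)

lemma fBig_Q_iff {C : Set (ModuleCat.{u} R)} (hC : IsWideSubcategory C)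
    (K : CochainComplex (ModuleCat.{u} R) ℤ) :
    DerivedCategory.Q.obj K ∈ fBig C ↔ ∀ n, K.homology n ∈ C :=
  ⟨fun h n => hC.mem_of_iso ((DerivedCategory.homologyFunctorFactors _ n).app K) (h n),
   fun h n => hC.mem_of_iso ((DerivedCategory.homologyFunctorFactors _ n).app K).symm (h n)⟩

lemma exists_desc {ι : Type u} (K : ι → CochainComplex (ModuleCat.{u} R) ℤ)
    (Y : CochainComplex (ModuleCat.{u} R) ℤ)
    (f : ∀ i, DerivedCategory.Q.obj (K i) ⟶ DerivedCategory.Q.obj Y) :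
    ∃ ψ : DerivedCategory.Q.obj (sumComplex K) ⟶ DerivedCategory.Q.obj Y,
      ∀ i, DerivedCategory.Q.map (sumIn K i) ≫ ψ = f i := by
  choose K' s hs g hg using fun i => DerivedCategory.right_fac (f i)
  have hq : QuasiIso (sumMap s) := quasiIso_sumMap s
    (fun i => (DerivedCategory.isIso_Q_map_iff_quasiIso (C := ModuleCat.{u} R) _).1 (hs i))
  have : IsIso (DerivedCategory.Q.map (sumMap s)) :=
    (DerivedCategory.isIso_Q_map_iff_quasiIso (C := ModuleCat.{u} R) _).2 hq
  refine ⟨inv (DerivedCategory.Q.map (sumMap s)) ≫ DerivedCategory.Q.map (sumDesc K' g),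
    fun i => ?_⟩
  rw [hg i, ← sumIn_desc K' g i, Functor.map_comp, IsIso.eq_inv_comp, ← Functor.map_comp_assoc,
    ← sumIn_map, Functor.map_comp_assoc, IsIso.hom_inv_id_assoc]

lemma fBig_sums {C : Set (ModuleCat.{u} R)} (hC : IsWideSubcategory C)
    (hC' : ClosedUnderDirectSums.{u} C) : ClosedUnderDirectSums.{u} (fBig.{w, u} C) := by
  intro ι X c hc hX
  let K : ι → CochainComplex (ModuleCat.{u} R) ℤ := fun i => DerivedCategory.Q.objPreimage (X i)
  let e : ∀ i, DerivedCategory.Q.obj (K i) ≅ X i := fun i =>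
    DerivedCategory.Q.objObjPreimageIso (X i)
  let e' := DerivedCategory.Q.objObjPreimageIso c.pt
  obtain ⟨ψ, hψ⟩ := exists_desc K (DerivedCategory.Q.objPreimage c.pt)
    (fun i => (e i).hom ≫ c.inj i ≫ e'.inv)
  let φ : c.pt ⟶ DerivedCategory.Q.obj (sumComplex K) :=
    Cofan.IsColimit.desc hc (fun i => (e i).inv ≫ DerivedCategory.Q.map (sumIn K i))
  refine fBig_retract hC _ (DerivedCategory.Q.obj (sumComplex K)) φ (ψ ≫ e'.hom) ?_ ?_
  · refine Cofan.IsColimit.hom_ext hc _ _ (fun i => ?_)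
    have : c.inj i ≫ φ = (e i).inv ≫ DerivedCategory.Q.map (sumIn K i) :=
      Cofan.IsColimit.fac hc _ i
    rw [reassoc_of% this, reassoc_of% (hψ i)]
    simp
  · rw [fBig_Q_iff hC]
    intro n
    exact sum_homology_mem K n C hC hC' (fun i =>
      (fBig_Q_iff hC (K i)).1 (fBig_iso hC (e i).symm (hX i)) n)

lemma fBig_thick {C : Set (ModuleCat.{u} R)} (hC : IsWideSubcategory C)
    (hC' : ClosedUnderDirectSums.{u} C) : IsThickSubcategory (fBig.{w, u} C) where
  mem_of_iso e h := fBig_iso hC e h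
  zero_mem n := zero_mem_of_closed hC hC' (Functor.map_isZero _ (isZero_zero _))
  shift_mem X a h n := hC.mem_of_iso
    (((DerivedCategory.homologyFunctor (ModuleCat.{u} R) 0).shiftIso a n (a + n) rfl).app X).symm
    (h (a + n))
  ext₂ T hT h1 h3 n :=
    five_mem_wide hC _ _ _ _ _ _ _
      (DerivedCategory.HomologySequence.exact₁ T hT (n - 1) n (by lia))
      (DerivedCategory.HomologySequence.exact₂ T hT n)
      (DerivedCategory.HomologySequence.exact₃ T hT n (n + 1) rfl)
      (h3 _) (h1 _) (h3 _) (h1 _)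
  retract_mem X Y i r h hY := fBig_retract hC X Y i r h hY

end Main

/-- Lemma 5.1: for any ring `R` and any wide subcategory `C` of
`R`-modules closed under arbitrary direct sums, `f(C)` is a localizing subcategory
(a thick subcategory closed under arbitrary direct sums) of `D(R)`, and
`g(f(C)) = C`. -/
theorem gf_eq_self_of_closed_under_directSums (R : Type u) [Ring R]
    [HasDerivedCategory.{w} (ModuleCat.{u} R)]
    (C : Set (ModuleCat.{u} R)) (hC : IsWideSubcategory C)
    (hC' : ClosedUnderDirectSums.{u} C) :
    (IsThickSubcategory (fBig C) ∧ ClosedUnderDirectSums.{u} (fBig C)) ∧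
    gBig (fBig C) = C := by
  refine ⟨⟨fBig_thick hC hC', fBig_sums hC hC'⟩, ?_⟩
  apply Set.Subset.antisymm
  · refine Set.sInter_subset_of_mem ⟨hC, hC', ?_⟩
    rintro M ⟨X, hX, n, ⟨e⟩⟩
    exact hC.mem_of_iso e (hX n)
  · intro M hM D hD
    refine hD.2.2 ⟨(DerivedCategory.Q.obj ((CochainComplex.singleFunctor _ 0).obj M)), ?_, 0, ?_⟩
    · rw [fBig_Q_iff hC]
      intro n
      by_cases hn : n = 0
      · subst hn
        exact hC.mem_of_iso
          ((HomologicalComplex.homologyFunctorSingleIso _ (ComplexShape.up ℤ) 0).app M).symm hM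
      · exact zero_mem_of_closed hC hC'
          (HomologicalComplex.isZero_single_obj_homology (ComplexShape.up ℤ) 0 M n hn)
    · exact ⟨(DerivedCategory.homologyFunctorFactors _ 0).app _ ≪≫
        (HomologicalComplex.homologyFunctorSingleIso _ (ComplexShape.up ℤ) 0).app M⟩
end
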